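/- arXiv:2108.09799 — 2 statements merged into one kernel-verified Lean document; each statement's English description precedes it below -/
import Mathlib

section
/- Fix real numbers x0 < x1 and y ∈ (x0, x1], and let α : ℝ → ℝ be Lebesgue integrable and square-integrable on (x0, x1). Then ∫_{−∞}^{∞} −log( 1 − |Th_α^{(x0,y)}(ω)|² ) dω ≤ π · ∫_{x0}^{y} |α|². (Here |Th_α^{(x0,y)}(ω)| < 1 for every real ω, so the integrand is well defined and nonnegative.) -/
open MeasureTheory

/-- The iterates `A_ω^j 𝟙` of the conjugate-linear Volterra operator
`A_ω f(t) = ∫_{x0}^t α(s) e^{2i(s−x0)ω} conj(f(s)) ds`. -/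
noncomputable def Aiter (x0 : ℝ) (α : ℝ → ℝ) (ω : ℂ) : ℕ → ℝ → ℂ
  | 0 => fun _ => 1
  | j + 1 => fun t =>
      ∫ s in x0..t,
        (α s : ℂ) * Complex.exp (2 * Complex.I * ((s : ℂ) - (x0 : ℂ)) * ω)
          * (starRingEnd ℂ) (Aiter x0 α ω j s)

/-- The harmonic exponential `E_α^{(x0,y)}(ω) = Σ_{j≥0} A_ω^j 𝟙(y)`. -/
noncomputable def harmE (x0 y : ℝ) (α : ℝ → ℝ) (ω : ℂ) : ℂ :=
  ∑' j : ℕ, Aiter x0 α ω j y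

/-! For real `ω`, conjugating the iterates `A_ω^j 𝟙` amounts to replacing `ω` by `-ω`; continued to
complex `ω` in this second form, the harmonic exponential and its parts `cosh` and `sinh`, even and
odd in `α`, are entire. As functions of the endpoint, `cosh` and a multiple of `sinh` solve a
Zakharov–Shabat system. Its energy identity gives `|cosh|² = 1 + |sinh|²` on `ℝ`, so that the
integrand is `2 log |cosh|`, and `|cosh| ≥ 1` on the closed upper half-plane, where `log |cosh|` is
therefore harmonic and nonnegative. Grönwall's inequality gives `|cosh(iη)|² ≤ exp(∫ α² / η)`.
Poisson's formula on large discs tangent to `ℝ` at `0`, followed by Fatou's lemma, bounds the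
Poisson integral of `log |cosh|` at `iη` by its value there; multiplying by `π η` and letting
`η → ∞`, again by Fatou's lemma, gives the claim. -/

section AbsoluteContinuity

variable {a b : ℝ}

theorem absolutelyContinuousOnInterval_comp {E X : Type*} [SeminormedAddCommGroup E]
    [PseudoMetricSpace X] {f : ℝ → E} {g : E → X} (hg : LocallyLipschitz g)
    (hf : AbsolutelyContinuousOnInterval f a b) :
    AbsolutelyContinuousOnInterval (fun t => g (f t)) a b := by
  obtain ⟨K, hK⟩ : ∃ K, LipschitzOnWith K g (f '' Set.uIcc a b) :=
    hg.locallyLipschitzOn.exists_lipschitzOnWith_of_compact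
      (isCompact_uIcc.image_of_continuousOn hf.continuousOn)
  refine squeeze_zero' (.of_forall fun E => Finset.sum_nonneg fun i _ => dist_nonneg) ?_
    (by simpa using Filter.Tendsto.const_mul (K : ℝ) hf)
  filter_upwards [Filter.mem_inf_of_right (Filter.mem_principal_self _)] with E hE
  rw [Finset.mul_sum]
  exact Finset.sum_le_sum fun i hi =>
    hK.dist_le_mul _ ⟨_, (hE.1 i hi).1, rfl⟩ _ ⟨_, (hE.1 i hi).2, rfl⟩

theorem absolutelyContinuousOnInterval_norm_sq {E : Type*} [SeminormedAddCommGroup E] {f : ℝ → E}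
    (hf : AbsolutelyContinuousOnInterval f a b) :
    AbsolutelyContinuousOnInterval (fun t => ‖f t‖ ^ 2) a b := by
  have hnorm := absolutelyContinuousOnInterval_comp lipschitzWith_one_norm.locallyLipschitz hf
  simpa only [sq] using hnorm.fun_mul hnorm

theorem absolutelyContinuousOnInterval_primitive {E : Type*} [NormedAddCommGroup E]
    [NormedSpace ℝ E] {f : ℝ → E} (hf : IntervalIntegrable f volume a b) :
    AbsolutelyContinuousOnInterval (fun t => ∫ s in a..t, f s) a b := by
  have hsub {t : ℝ} (ht : t ∈ Set.uIcc a b) : Set.uIcc a t ⊆ Set.uIcc a b :=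
    Set.uIcc_subset_uIcc_left ht
  refine squeeze_zero' (.of_forall fun E => Finset.sum_nonneg fun i _ => dist_nonneg) ?_
    (hf.norm.absolutelyContinuousOnInterval_intervalIntegral Set.left_mem_uIcc)
  filter_upwards [Filter.mem_inf_of_right (Filter.mem_principal_self _)] with E hE
  refine Finset.sum_le_sum fun i hi => ?_
  have hint {t : ℝ} (ht : t ∈ Set.uIcc a b) : IntervalIntegrable f volume a t :=
    hf.mono_set (hsub ht)
  obtain ⟨hs, ht⟩ := hE.1 i hi
  rw [dist_eq_norm, dist_eq_norm, intervalIntegral.integral_interval_sub_left (hint hs) (hint ht),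
    intervalIntegral.integral_interval_sub_left (hint hs).norm (hint ht).norm]
  exact intervalIntegral.norm_integral_le_abs_integral_norm

theorem integral_eq_sub_of_absolutelyContinuousOnInterval {f f' : ℝ → ℝ}
    (hf : AbsolutelyContinuousOnInterval f a b)
    (hf' : ∀ᵐ t, t ∈ Set.uIcc a b → HasDerivAt f (f' t) t) :
    ∫ t in a..b, f' t = f b - f a := by
  rw [← hf.integral_deriv_eq_sub]
  refine intervalIntegral.integral_congr_ae ?_
  filter_upwards [hf'] with t ht hmem
  rw [(ht (Set.uIoc_subset_uIcc hmem)).deriv]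

theorem integral_mul_exp_primitive {β : ℝ → ℝ} (hβ : IntervalIntegrable β volume a b) :
    ∫ t in a..b, β t * Real.exp (∫ s in a..t, β s) = Real.exp (∫ s in a..b, β s) - 1 := by
  have hexp := absolutelyContinuousOnInterval_comp Real.contDiff_exp.locallyLipschitz
    (absolutelyContinuousOnInterval_primitive hβ)
  rw [integral_eq_sub_of_absolutelyContinuousOnInterval hexp]
  · simp
  · filter_upwards [hβ.ae_hasDerivAt_integral] with t ht hmem
    simpa only [mul_comm] using (ht hmem a Set.left_mem_uIcc).exp

theorem norm_integral_le_mul_exp_of_norm_le {E : Type*} [NormedAddCommGroup E] [NormedSpace ℝ E]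
    {f : ℝ → E} {β : ℝ → ℝ} {c : ℝ} (hab : a ≤ b) (hc : 0 ≤ c)
    (hβ : IntervalIntegrable β volume a b)
    (hle : ∀ t ∈ Set.Ioc a b, ‖f t‖ ≤ c * (β t * Real.exp (∫ s in a..t, β s))) :
    ‖∫ t in a..b, f t‖ ≤ c * Real.exp (∫ s in a..b, β s) := by
  have hint : IntervalIntegrable (fun t => β t * Real.exp (∫ s in a..t, β s)) volume a b :=
    hβ.mul_continuousOn <| Real.continuous_exp.comp_continuousOn
      (absolutelyContinuousOnInterval_primitive hβ).continuousOn
  calc ‖∫ t in a..b, f t‖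
      ≤ ∫ t in a..b, c * (β t * Real.exp (∫ s in a..t, β s)) :=
        intervalIntegral.norm_integral_le_of_norm_le hab (.of_forall hle) (hint.const_mul c)
    _ = c * (Real.exp (∫ s in a..b, β s) - 1) := by
        rw [intervalIntegral.integral_const_mul, integral_mul_exp_primitive hβ]
    _ ≤ c * Real.exp (∫ s in a..b, β s) := by
        gcongr
        exact sub_le_self _ zero_le_one

theorem le_mul_exp_of_ae_deriv_le {W β : ℝ → ℝ} (hab : a ≤ b)
    (hβ : IntervalIntegrable β volume a b) (hW : AbsolutelyContinuousOnInterval W a b)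
    (hle : ∀ᵐ t, t ∈ Set.uIcc a b → deriv W t ≤ β t * W t) :
    W b ≤ W a * Real.exp (∫ s in a..b, β s) := by
  set B : ℝ → ℝ := fun t => ∫ s in a..t, β s
  have hexp : AbsolutelyContinuousOnInterval (fun t => Real.exp (-B t)) a b :=
    absolutelyContinuousOnInterval_comp Real.contDiff_exp.locallyLipschitz
      (absolutelyContinuousOnInterval_primitive hβ).fun_neg
  have hderiv : ∀ᵐ t, t ∈ Set.uIcc a b → HasDerivAt (fun t => W t * Real.exp (-B t))
      ((deriv W t - β t * W t) * Real.exp (-B t)) t := by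
    filter_upwards [hβ.ae_hasDerivAt_integral, hW.ae_differentiableAt] with t hB hW hmem
    exact ((hW hmem).hasDerivAt.mul (hB hmem a Set.left_mem_uIcc).fun_neg.exp).congr_deriv
      (by ring)
  have hdecr : W b * Real.exp (-B b) - W a * Real.exp (-B a) ≤ 0 := by
    rw [← integral_eq_sub_of_absolutelyContinuousOnInterval (hW.fun_mul hexp) hderiv,
      intervalIntegral.integral_of_le hab]
    refine integral_nonpos_of_ae ((ae_restrict_iff' measurableSet_Ioc).2 ?_)
    filter_upwards [hle] with t ht hmem
    exact mul_nonpos_of_nonpos_of_nonneg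
      (sub_nonpos.2 (ht (Set.Icc_subset_uIcc (Set.Ioc_subset_Icc_self hmem)))) (Real.exp_pos _).le
  have hBa : B a = 0 := intervalIntegral.integral_same
  rw [hBa, neg_zero, Real.exp_zero, mul_one, sub_nonpos, Real.exp_neg, ← div_eq_mul_inv] at hdecr
  exact (div_le_iff₀ (Real.exp_pos _)).1 hdecr

end AbsoluteContinuity

theorem differentiable_integral_of_locally_dominated {X E : Type*} [MeasurableSpace X]
    {μ : Measure X} [NormedAddCommGroup E] [NormedSpace ℂ E] [CompleteSpace E] {F : ℂ → X → E}
    (hF_meas : ∀ ω, AEStronglyMeasurable (F ω) μ)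
    (hF_diff : ∀ᵐ s ∂μ, Differentiable ℂ fun ω => F ω s)
    (hF_bound : ∀ R : ℝ, ∃ b : X → ℝ, Integrable b μ ∧
      ∀ᵐ s ∂μ, ∀ ω, ‖ω‖ ≤ R → ‖F ω s‖ ≤ b s) :
    Differentiable ℂ fun ω => ∫ s, F ω s ∂μ := by
  intro ω₀
  obtain ⟨b, hb_int, hb⟩ := hF_bound (‖ω₀‖ + 2)
  have hint : Integrable (F ω₀) μ :=
    hb_int.mono' (hF_meas ω₀) (hb.mono fun s hs => hs ω₀ (by linarith))
  have hderiv_meas : AEStronglyMeasurable (fun s => deriv (fun ω => F ω s) ω₀) μ := by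
    refine aestronglyMeasurable_of_tendsto_ae (nhdsWithin 0 {0}ᶜ)
      (f := fun (h : ℂ) s => h⁻¹ • (F (ω₀ + h) s - F ω₀ s))
      (fun h => ((hF_meas _).fun_sub (hF_meas _)).fun_const_smul _) ?_
    filter_upwards [hF_diff] with s hs
    exact hasDerivAt_iff_tendsto_slope_zero.1 (hs ω₀).hasDerivAt
  refine (hasDerivAt_integral_of_dominated_loc_of_deriv_le (bound := b)
    (F' := fun ω s => deriv (fun ω => F ω s) ω) (Metric.ball_mem_nhds ω₀ one_pos)
    (.of_forall hF_meas) hint hderiv_meas ?_ hb_int ?_).2.differentiableAt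
  · filter_upwards [hF_diff, hb] with s hs hbs ω hω
    have hcauchy := Complex.norm_deriv_le_of_forall_mem_sphere_norm_le one_pos hs.diffContOnCl
      fun z (hz : z ∈ Metric.sphere ω 1) => hbs z ?_
    · simpa only [div_one] using hcauchy
    · rw [mem_sphere_iff_norm] at hz
      rw [mem_ball_iff_norm] at hω
      have := norm_add₃_le (a := z - ω) (b := ω - ω₀) (c := ω₀)
      rw [sub_add_sub_cancel, sub_add_cancel] at this
      linarith
  · filter_upwards [hF_diff] with s hs ω _
    exact (hs ω).hasDerivAt

theorem four_mul_inner_le {E : Type*} [NormedAddCommGroup E] [InnerProductSpace ℝ E] {η : ℝ}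
    (hη : 0 < η) (r : ℝ) (z w : E) :
    4 * (r * inner ℝ z w) ≤ r ^ 2 / η * ‖z‖ ^ 2 + 4 * η * ‖w‖ ^ 2 := by
  have hcauchy : r * inner ℝ z w ≤ |r| * ‖z‖ * ‖w‖ := by
    rw [← real_inner_smul_left, ← Real.norm_eq_abs, ← norm_smul]
    exact real_inner_le_norm _ _
  have hsq : 0 ≤ (|r| * ‖z‖ - 2 * η * ‖w‖) ^ 2 / η := by positivity
  have hexpand : (|r| * ‖z‖ - 2 * η * ‖w‖) ^ 2 / η =
      r ^ 2 / η * ‖z‖ ^ 2 + 4 * η * ‖w‖ ^ 2 - 4 * (|r| * ‖z‖ * ‖w‖) := by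
    rw [← sq_abs r]
    field_simp
    ring
  linarith

/-- An absolutely continuous solution `(c, u)` on `[a, b]` of the Zakharov–Shabat system
`c' = α u`, `u' = α c + 2iω u` with initial value `(1, 0)`. -/
structure IsZakharovShabatSolution (α : ℝ → ℝ) (ω : ℂ) (a b : ℝ) (c u : ℝ → ℂ) : Prop where
  fst_ac : AbsolutelyContinuousOnInterval c a b
  snd_ac : AbsolutelyContinuousOnInterval u a b
  fst_left : c a = 1
  snd_left : u a = 0
  fst_deriv : ∀ᵐ t, t ∈ Set.uIcc a b → HasDerivAt c (α t • u t) t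
  snd_deriv : ∀ᵐ t, t ∈ Set.uIcc a b →
    HasDerivAt u (α t • c t + 2 * Complex.I * ω * u t) t

namespace IsZakharovShabatSolution

variable {α : ℝ → ℝ} {ω : ℂ} {a b : ℝ} {c u : ℝ → ℂ}

theorem fst_normSq_deriv (h : IsZakharovShabatSolution α ω a b c u) :
    ∀ᵐ t, t ∈ Set.uIcc a b →
      HasDerivAt (fun t => ‖c t‖ ^ 2) (2 * α t * inner ℝ (c t) (u t)) t := by
  filter_upwards [h.fst_deriv] with t ht hmem
  refine (ht hmem).norm_sq.congr_deriv ?_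
  rw [real_inner_smul_right, mul_assoc]

theorem snd_normSq_deriv (h : IsZakharovShabatSolution α ω a b c u) :
    ∀ᵐ t, t ∈ Set.uIcc a b → HasDerivAt (fun t => ‖u t‖ ^ 2)
      (2 * α t * inner ℝ (c t) (u t) - 4 * ω.im * ‖u t‖ ^ 2) t := by
  filter_upwards [h.snd_deriv] with t ht hmem
  refine (ht hmem).norm_sq.congr_deriv ?_
  have hrot : inner ℝ (u t) (2 * Complex.I * ω * u t) = -2 * ω.im * ‖u t‖ ^ 2 := by
    rw [Complex.inner, mul_assoc _ (u t), Complex.mul_conj, Complex.normSq_eq_norm_sq,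
      Complex.re_mul_ofReal]
    simp
  rw [inner_add_right, hrot, real_inner_smul_right, real_inner_comm]
  ring

theorem normSq_sub_normSq (h : IsZakharovShabatSolution α ω a b c u) :
    ‖c b‖ ^ 2 - ‖u b‖ ^ 2 = 1 + 4 * ω.im * ∫ t in a..b, ‖u t‖ ^ 2 := by
  have hderiv : ∀ᵐ t, t ∈ Set.uIcc a b → HasDerivAt (fun t => ‖c t‖ ^ 2 - ‖u t‖ ^ 2)
      (4 * ω.im * ‖u t‖ ^ 2) t := by
    filter_upwards [h.fst_normSq_deriv, h.snd_normSq_deriv] with t hc hu hmem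
    exact ((hc hmem).sub (hu hmem)).congr_deriv (by ring)
  have hftc := integral_eq_sub_of_absolutelyContinuousOnInterval
    ((absolutelyContinuousOnInterval_norm_sq h.fst_ac).fun_sub
      (absolutelyContinuousOnInterval_norm_sq h.snd_ac)) hderiv
  rw [intervalIntegral.integral_const_mul, h.fst_left, h.snd_left, norm_one, norm_zero] at hftc
  linarith

theorem one_le_norm_fst (h : IsZakharovShabatSolution α ω a b c u) (hab : a ≤ b)
    (hω : 0 ≤ ω.im) : 1 ≤ ‖c b‖ := by
  have hint : 0 ≤ ∫ t in a..b, ‖u t‖ ^ 2 :=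
    intervalIntegral.integral_nonneg hab fun t _ => sq_nonneg _
  refine (one_le_sq_iff₀ (norm_nonneg _)).1 ?_
  have := h.normSq_sub_normSq
  have : 0 ≤ 4 * ω.im * ∫ t in a..b, ‖u t‖ ^ 2 := by positivity
  linarith [sq_nonneg ‖u b‖]

theorem norm_sq_fst_le (h : IsZakharovShabatSolution α ω a b c u) (hab : a ≤ b)
    (hα : IntervalIntegrable (fun t => α t ^ 2) volume a b) (hω : 0 < ω.im) :
    ‖c b‖ ^ 2 ≤ Real.exp ((∫ t in a..b, α t ^ 2) / ω.im) := by
  have hderiv_le : ∀ᵐ t, t ∈ Set.uIcc a b →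
      deriv (fun t => ‖c t‖ ^ 2 + ‖u t‖ ^ 2) t ≤ α t ^ 2 / ω.im * (‖c t‖ ^ 2 + ‖u t‖ ^ 2) := by
    filter_upwards [h.fst_normSq_deriv, h.snd_normSq_deriv] with t hc hu hmem
    rw [((hc hmem).fun_add (hu hmem)).deriv]
    have hyoung := four_mul_inner_le hω (α t) (c t) (u t)
    have : 0 ≤ α t ^ 2 / ω.im * ‖u t‖ ^ 2 := by positivity
    linarith
  have hgronwall := le_mul_exp_of_ae_deriv_le hab (hα.div_const ω.im)
    ((absolutelyContinuousOnInterval_norm_sq h.fst_ac).fun_add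
      (absolutelyContinuousOnInterval_norm_sq h.snd_ac)) hderiv_le
  simp only [h.fst_left, h.snd_left, norm_one, norm_zero,
    intervalIntegral.integral_div] at hgronwall
  linarith [sq_nonneg ‖u b‖]

end IsZakharovShabatSolution

theorem lintegral_le_of_tendsto_of_frequently_le {ι X : Type*} [MeasurableSpace X] {μ : Measure X}
    {l : Filter ι} [l.IsCountablyGenerated] {f : ι → X → ENNReal} {g : X → ENNReal} {C : ENNReal}
    (hlim : ∀ᵐ x ∂μ, Filter.Tendsto (fun i => f i x) l (nhds (g x)))
    (hf : ∀ᶠ i in l, AEMeasurable (f i) μ) (hle : ∃ᶠ i in l, ∫⁻ x, f i x ∂μ ≤ C) :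
    ∫⁻ x, g x ∂μ ≤ C := by
  obtain ⟨k, hk, hfk⟩ := Filter.exists_seq_forall_of_frequently (hle.and_eventually hf)
  calc ∫⁻ x, g x ∂μ = ∫⁻ x, Filter.liminf (fun n => f (k n) x) Filter.atTop ∂μ :=
        lintegral_congr_ae (hlim.mono fun x hx => (hx.comp hk).liminf_eq.symm)
    _ ≤ Filter.liminf (fun n => ∫⁻ x, f (k n) x ∂μ) Filter.atTop :=
        lintegral_liminf_le' fun n => (hfk n).2
    _ ≤ C := Filter.liminf_le_of_frequently_le' (.of_forall fun n => (hfk n).1)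

section UpperHalfPlane

/-- The circle of radius `R` touching the real line at `0` from above, parametrized by the signed
arc length `t` from the point of tangency. -/
noncomputable def tangentCircle (R t : ℝ) : ℂ :=
  circleMap (R * Complex.I) R (t / R - Real.pi / 2)

theorem tangentCircle_eq (R t : ℝ) :
    tangentCircle R t = R * Complex.I * (1 - Complex.exp (t / R * Complex.I)) := by
  have hexp : Complex.exp (-(Real.pi / 2 * Complex.I)) = -Complex.I := by
    rw [Complex.exp_neg, Complex.exp_pi_div_two_mul_I, Complex.inv_I]
  rw [tangentCircle, circleMap]
  push_cast
  rw [sub_mul, sub_eq_add_neg, Complex.exp_add, hexp]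
  ring

theorem continuous_tangentCircle (R : ℝ) : Continuous (tangentCircle R) :=
  (continuous_circleMap _ _).comp (by fun_prop)

theorem tendsto_tangentCircle_atTop (t : ℝ) :
    Filter.Tendsto (fun R => tangentCircle R t) Filter.atTop (nhds t) := by
  have hderiv : HasDerivAt (fun r : ℝ => Complex.exp (r * (t * Complex.I))) (t * Complex.I) 0 := by
    simpa using ((Complex.ofRealCLM.hasDerivAt (x := 0)).mul_const (t * Complex.I)).cexp
  have hslope := (hasDerivAt_iff_tendsto_slope_zero.1 hderiv).comp
    (tendsto_inv_atTop_nhdsGT_zero.mono_right (nhdsWithin_mono 0 fun r hr => ne_of_gt hr))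
  have hlim := hslope.const_mul (-Complex.I)
  have ht : -Complex.I * (t * Complex.I) = t := by linear_combination -(t : ℂ) * Complex.I_mul_I
  rw [ht] at hlim
  refine hlim.congr fun R => ?_
  have hangle : (R : ℂ)⁻¹ * (t * Complex.I) = t / R * Complex.I := by ring
  rw [tangentCircle_eq, Function.comp_apply, inv_inv, Complex.real_smul]
  push_cast
  rw [zero_add, zero_mul, Complex.exp_zero, hangle]
  ring

theorem circleAverage_eq_integral_tangentCircle {R : ℝ} (hR : 0 < R) (f : ℂ → ℝ) :
    Real.circleAverage f (R * Complex.I) R =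
      (2 * Real.pi * R)⁻¹ * ∫ t in -(Real.pi * R)..Real.pi * R, f (tangentCircle R t) := by
  have hshift := intervalIntegral.integral_comp_div_add (a := -(Real.pi * R)) (b := Real.pi * R)
    (fun θ => f (circleMap (R * Complex.I) R (θ + (-Real.pi - Real.pi / 2)))) hR.ne' Real.pi
  rw [neg_div, mul_div_cancel_right₀ _ hR.ne', neg_add_cancel, ← two_mul, smul_eq_mul] at hshift
  have hcircle : ∀ t, tangentCircle R t =
      circleMap (R * Complex.I) R (t / R + Real.pi + (-Real.pi - Real.pi / 2)) := fun t => by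
    rw [tangentCircle]; congr 1; ring
  simp_rw [hcircle, hshift, Real.circleAverage_eq_integral_add (-Real.pi - Real.pi / 2),
    smul_eq_mul]
  field_simp

theorem closedBall_subset_upperHalfPlane (R : ℝ) :
    Metric.closedBall (R * Complex.I) R ⊆ {z | 0 ≤ z.im} := by
  intro z hz
  have him := (Complex.abs_im_le_norm _).trans (mem_closedBall_iff_norm.1 hz)
  simp only [Complex.sub_im, Complex.mul_im, Complex.ofReal_re, Complex.I_im, mul_one,
    Complex.ofReal_im, Complex.I_re, mul_zero, add_zero] at him
  have := (abs_le.1 him).1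
  exact show 0 ≤ z.im by linarith

theorem tangentCircle_mem_sphere {R : ℝ} (hR : 0 ≤ R) (t : ℝ) :
    tangentCircle R t ∈ Metric.sphere (R * Complex.I) R :=
  circleMap_mem_sphere _ hR _

theorem tangentCircle_im_nonneg {R : ℝ} (hR : 0 ≤ R) (t : ℝ) : 0 ≤ (tangentCircle R t).im :=
  closedBall_subset_upperHalfPlane R
    (Metric.sphere_subset_closedBall (tangentCircle_mem_sphere hR t))

theorem norm_sub_ofReal_mul_I_sq (w : ℂ) (R : ℝ) :
    ‖w - R * Complex.I‖ ^ 2 = R ^ 2 - (2 * R * w.im - ‖w‖ ^ 2) := by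
  rw [Complex.sq_norm, Complex.sq_norm, Complex.normSq_apply, Complex.normSq_apply]
  simp only [Complex.sub_re, Complex.sub_im, Complex.mul_re, Complex.mul_im, Complex.ofReal_re,
    Complex.ofReal_im, Complex.I_re, Complex.I_im]
  ring

theorem mem_ball_ofReal_mul_I_iff {R : ℝ} (hR : 0 < R) {w : ℂ} :
    w ∈ Metric.ball (R * Complex.I) R ↔ ‖w‖ ^ 2 / (2 * R) < w.im := by
  rw [mem_ball_iff_norm, ← pow_lt_pow_iff_left₀ (norm_nonneg _) hR.le two_ne_zero,
    norm_sub_ofReal_mul_I_sq, sub_lt_self_iff, sub_pos, div_lt_iff₀ (by positivity), mul_comm w.im]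

theorem tendsto_div_two_mul_atTop (c : ℝ) :
    Filter.Tendsto (fun R : ℝ => c / (2 * R)) Filter.atTop (nhds 0) :=
  (Filter.tendsto_id.const_mul_atTop two_pos).const_div_atTop c

/-- The Poisson kernel at `w` of the disc of radius `R` touching the real line at `0` from above,
as a function of arc length, scaled so as to converge to `π` times that of the half-plane. -/
noncomputable def tangentPoissonKernel (R : ℝ) (w : ℂ) (t : ℝ) : ℝ :=
  (2 * R)⁻¹ * poissonKernel (R * Complex.I) w (tangentCircle R t)

theorem tangentPoissonKernel_eq {R : ℝ} (hR : 0 < R) (w : ℂ) (t : ℝ) :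
    tangentPoissonKernel R w t = (w.im - ‖w‖ ^ 2 / (2 * R)) / ‖tangentCircle R t - w‖ ^ 2 := by
  rw [tangentPoissonKernel, poissonKernel_def,
    mem_sphere_iff_norm.1 (tangentCircle_mem_sphere hR.le t), norm_sub_ofReal_mul_I_sq,
    sub_sub_sub_cancel_right, sub_sub_cancel]
  field_simp

theorem tangentPoissonKernel_nonneg {R : ℝ} {w : ℂ} (hw : w ∈ Metric.ball (R * Complex.I) R)
    (t : ℝ) : 0 ≤ tangentPoissonKernel R w t := by
  have hR : 0 < R := Metric.pos_of_mem_ball hw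
  rw [tangentPoissonKernel_eq hR]
  exact div_nonneg (sub_nonneg.2 ((mem_ball_ofReal_mul_I_iff hR).1 hw).le) (sq_nonneg _)

theorem continuous_tangentPoissonKernel {R : ℝ} {w : ℂ} (hw : w ∈ Metric.ball (R * Complex.I) R) :
    Continuous (tangentPoissonKernel R w) := by
  have hR : 0 < R := Metric.pos_of_mem_ball hw
  simp_rw [funext (tangentPoissonKernel_eq hR w)]
  refine continuous_const.div (((continuous_tangentCircle R).sub continuous_const).norm.pow 2)
    fun t => ?_
  exact pow_ne_zero 2 (norm_ne_zero_iff.2 (sub_ne_zero.2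
    (Metric.sphere_disjoint_ball.ne_of_mem (tangentCircle_mem_sphere hR.le t) hw)))

theorem tendsto_tangentPoissonKernel_atTop {w : ℂ} (hw : 0 < w.im) (t : ℝ) :
    Filter.Tendsto (fun R => tangentPoissonKernel R w t) Filter.atTop
      (nhds (w.im / ‖t - w‖ ^ 2)) := by
  have htw : (t : ℂ) - w ≠ 0 := fun h => hw.ne' (by simpa using congrArg Complex.im h)
  have hnum : Filter.Tendsto (fun R : ℝ => w.im - ‖w‖ ^ 2 / (2 * R)) Filter.atTop (nhds w.im) := by
    simpa using (tendsto_div_two_mul_atTop (‖w‖ ^ 2)).const_sub w.im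
  refine (hnum.div (((tendsto_tangentCircle_atTop t).sub_const w).norm.pow 2)
    (pow_ne_zero 2 (norm_ne_zero_iff.2 htw))).congr' ?_
  filter_upwards [Filter.eventually_gt_atTop 0] with R hR
  exact (tangentPoissonKernel_eq hR w t).symm

variable {u : ℂ → ℝ}

theorem continuous_comp_tangentCircle (hu : InnerProductSpace.HarmonicOnNhd u {z | 0 ≤ z.im})
    {R : ℝ} (hR : 0 ≤ R) :
    Continuous fun t => u (tangentCircle R t) :=
  hu.continuousOn.comp_continuous (continuous_tangentCircle R) (tangentCircle_im_nonneg hR)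

theorem integral_tangentPoissonKernel_mul
    (hu : InnerProductSpace.HarmonicOnNhd u {z | 0 ≤ z.im}) {w : ℂ} {R : ℝ}
    (hw : w ∈ Metric.ball (R * Complex.I) R) :
    ∫ t in -(Real.pi * R)..Real.pi * R, tangentPoissonKernel R w t * u (tangentCircle R t) =
      Real.pi * u w := by
  have hR : 0 < R := Metric.pos_of_mem_ball hw
  have hpoisson :=
    (hu.mono (closedBall_subset_upperHalfPlane R)).circleAverage_poissonKernel_smul hw
  rw [circleAverage_eq_integral_tangentCircle hR] at hpoisson
  simp only [tangentPoissonKernel, mul_assoc, intervalIntegral.integral_const_mul, ← hpoisson,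
    Pi.smul_apply', smul_eq_mul]
  field_simp

theorem lintegral_poisson_le (hu : InnerProductSpace.HarmonicOnNhd u {z | 0 ≤ z.im})
    (hu_nonneg : ∀ z : ℂ, 0 ≤ z.im → 0 ≤ u z) {w : ℂ} (hw : 0 < w.im) :
    ∫⁻ t : ℝ, ENNReal.ofReal (w.im / ‖t - w‖ ^ 2 * u t) ≤ ENNReal.ofReal (Real.pi * u w) := by
  set K : ℝ → ℝ → ℝ := fun R t => tangentPoissonKernel R w t * u (tangentCircle R t)
  set arc : ℝ → Set ℝ := fun R => Set.Ioc (-(Real.pi * R)) (Real.pi * R)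
  have hlim (t : ℝ) : Filter.Tendsto
      (fun R => (arc R).indicator (fun t => ENNReal.ofReal (K R t)) t) Filter.atTop
      (nhds (ENNReal.ofReal (w.im / ‖t - w‖ ^ 2 * u t))) := by
    have hu_cont : ContinuousAt u t := (hu t (by simp)).1.continuousAt
    refine (ENNReal.tendsto_ofReal ((tendsto_tangentPoissonKernel_atTop hw t).mul
      (hu_cont.tendsto.comp (tendsto_tangentCircle_atTop t)))).congr' ?_
    filter_upwards [(Filter.tendsto_id.const_mul_atTop Real.pi_pos).eventually_gt_atTop |t|]
      with R hR
    have ht : t ∈ arc R := ⟨(abs_lt.1 hR).1, (abs_lt.1 hR).2.le⟩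
    exact (Set.indicator_of_mem ht fun t => ENNReal.ofReal (K R t)).symm
  have hdisc : ∀ᶠ R : ℝ in Filter.atTop, w ∈ Metric.ball (R * Complex.I) R := by
    filter_upwards [Filter.eventually_gt_atTop (0 : ℝ),
      (tendsto_div_two_mul_atTop (‖w‖ ^ 2)).eventually_lt_const hw] with R hR hwR
    exact (mem_ball_ofReal_mul_I_iff hR).2 hwR
  have hK_cont {R : ℝ} (hR : w ∈ Metric.ball (R * Complex.I) R) : Continuous (K R) :=
    (continuous_tangentPoissonKernel hR).mul
      (continuous_comp_tangentCircle hu (Metric.pos_of_mem_ball hR).le)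
  refine lintegral_le_of_tendsto_of_frequently_le (.of_forall hlim) ?_ (hdisc.mono ?_).frequently
  · filter_upwards [hdisc] with R hR
    exact ((hK_cont hR).measurable.ennreal_ofReal.indicator measurableSet_Ioc).aemeasurable
  · intro R hR
    have hR0 : 0 < R := Metric.pos_of_mem_ball hR
    rw [lintegral_indicator measurableSet_Ioc, ← integral_tangentPoissonKernel_mul hu hR,
      intervalIntegral.integral_of_le (neg_le_self (by positivity)),
      ofReal_integral_eq_lintegral_ofReal (hK_cont hR).integrableOn_Ioc]
    exact Filter.Eventually.of_forall fun t => mul_nonneg (tangentPoissonKernel_nonneg hR t)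
      (hu_nonneg _ (tangentCircle_im_nonneg hR0.le t))

theorem tendsto_sq_div_norm_sub_mul_I_sq (t : ℝ) :
    Filter.Tendsto (fun η : ℝ => η ^ 2 / ‖(t : ℂ) - η * Complex.I‖ ^ 2) Filter.atTop (nhds 1) := by
  have hlim : Filter.Tendsto (fun η : ℝ => (1 + (t / η) ^ 2)⁻¹) Filter.atTop (nhds 1) := by
    simpa using ((Filter.tendsto_id.const_div_atTop t).pow 2).const_add 1 |>.inv₀ (by simp)
  refine hlim.congr' ?_
  filter_upwards [Filter.eventually_gt_atTop 0] with η hη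
  rw [norm_sub_ofReal_mul_I_sq, Complex.norm_real, Real.norm_eq_abs, sq_abs, Complex.ofReal_im,
    mul_zero, zero_sub, sub_neg_eq_add]
  field_simp

theorem lintegral_ofReal_le_of_im_mul_le (hu : InnerProductSpace.HarmonicOnNhd u {z | 0 ≤ z.im})
    (hu_nonneg : ∀ z : ℂ, 0 ≤ z.im → 0 ≤ u z) {M : ℝ}
    (hM : ∀ η : ℝ, 0 < η → η * u (η * Complex.I) ≤ M) :
    ∫⁻ t : ℝ, ENNReal.ofReal (u t) ≤ ENNReal.ofReal (Real.pi * M) := by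
  have hu_meas : Measurable fun t : ℝ => u t :=
    (hu.continuousOn.comp_continuous Complex.continuous_ofReal
      fun t => (Complex.ofReal_im t).ge).measurable
  have hmeas (c η : ℝ) :
      Measurable fun t : ℝ => ENNReal.ofReal (c / ‖(t : ℂ) - η * Complex.I‖ ^ 2 * u t) :=
    (Measurable.mul (by fun_prop) hu_meas).ennreal_ofReal
  refine lintegral_le_of_tendsto_of_frequently_le (l := Filter.atTop)
    (f := fun (η : ℝ) (t : ℝ) => ENNReal.ofReal (η ^ 2 / ‖(t : ℂ) - η * Complex.I‖ ^ 2 * u t))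
    (.of_forall fun t => ?_) (.of_forall fun η => (hmeas _ η).aemeasurable)
    ((Filter.eventually_gt_atTop 0).mono fun η hη => ?_).frequently
  · simpa using ENNReal.tendsto_ofReal ((tendsto_sq_div_norm_sub_mul_I_sq t).mul_const (u t))
  · have him : (η * Complex.I : ℂ).im = η := by simp
    have hpoisson := lintegral_poisson_le hu hu_nonneg (w := η * Complex.I) (him.symm ▸ hη)
    calc ∫⁻ t : ℝ, ENNReal.ofReal (η ^ 2 / ‖(t : ℂ) - η * Complex.I‖ ^ 2 * u t)
        = ENNReal.ofReal η *
          ∫⁻ t : ℝ, ENNReal.ofReal ((η * Complex.I).im / ‖(t : ℂ) - η * Complex.I‖ ^ 2 * u t) := by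
          rw [← lintegral_const_mul _ (hmeas _ η), him]
          simp only [← ENNReal.ofReal_mul hη.le, sq, mul_div_assoc, mul_assoc]
      _ ≤ ENNReal.ofReal η * ENNReal.ofReal (Real.pi * u (η * Complex.I)) := by gcongr
      _ = ENNReal.ofReal (Real.pi * (η * u (η * Complex.I))) := by
          rw [← ENNReal.ofReal_mul hη.le, mul_left_comm]
      _ ≤ ENNReal.ofReal (Real.pi * M) := by gcongr; exact hM η hη

end UpperHalfPlane

section Volterra

theorem conj_intervalIntegral (f : ℝ → ℂ) (a b : ℝ) :
    starRingEnd ℂ (∫ t in a..b, f t) = ∫ t in a..b, starRingEnd ℂ (f t) := by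
  simp only [intervalIntegral.intervalIntegral_eq_integral_uIoc, Complex.real_smul, map_mul,
    Complex.conj_ofReal, integral_conj]

/-- The oscillating factor `e^{2i(s−x0)ω}` in the kernel of the Volterra operator `A_ω`. -/
noncomputable def phase (x0 : ℝ) (ω : ℂ) (s : ℝ) : ℂ :=
  Complex.exp (2 * Complex.I * ((s : ℂ) - (x0 : ℂ)) * ω)

theorem phase_mul_phase_neg (x0 : ℝ) (ω : ℂ) (s : ℝ) : phase x0 ω s * phase x0 (-ω) s = 1 := by
  rw [phase, phase, mul_neg, Complex.exp_neg, mul_inv_cancel₀ (Complex.exp_ne_zero _)]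

theorem conj_phase_ofReal (x0 ω s : ℝ) :
    starRingEnd ℂ (phase x0 ω s) = phase x0 (-(ω : ℂ)) s := by
  rw [phase, phase, ← Complex.exp_conj]
  simp only [map_mul, map_sub, Complex.conj_ofNat, Complex.conj_I, Complex.conj_ofReal]
  ring_nf

theorem norm_phase (x0 : ℝ) (ω : ℂ) (s : ℝ) :
    ‖phase x0 ω s‖ = Real.exp (-2 * (s - x0) * ω.im) := by
  rw [phase, Complex.norm_exp, ← Complex.ofReal_sub, mul_right_comm, Complex.re_mul_ofReal]
  congr 1
  simp only [Complex.mul_re, Complex.mul_im, Complex.re_ofNat, Complex.im_ofNat, Complex.I_re,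
    Complex.I_im]
  ring

theorem norm_phase_le {x0 y s R : ℝ} {ω : ℂ} (hs : s ∈ Set.Icc x0 y) (hω : ‖ω‖ ≤ R) :
    ‖phase x0 ω s‖ ≤ Real.exp (2 * (y - x0) * R) := by
  rw [norm_phase, Real.exp_le_exp]
  have him : -ω.im ≤ R := (neg_le_abs _).trans ((Complex.abs_im_le_norm ω).trans hω)
  have hR : 0 ≤ R := (norm_nonneg ω).trans hω
  nlinarith [mul_le_mul_of_nonneg_left him (sub_nonneg.2 hs.1),
    mul_le_mul_of_nonneg_right (sub_le_sub_right hs.2 x0) hR]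

theorem norm_kernel_mul_le {x0 y s R : ℝ} {ω : ℂ} (α : ℝ → ℝ) (hs : s ∈ Set.Icc x0 y)
    (hω : ‖ω‖ ≤ R) (z : ℂ) :
    ‖(α s : ℂ) * phase x0 ω s * z‖ ≤ |α s| * Real.exp (2 * (y - x0) * R) * ‖z‖ := by
  rw [norm_mul, norm_mul, Complex.norm_real, Real.norm_eq_abs]
  gcongr
  exact norm_phase_le hs hω

theorem hasDerivAt_phase (x0 : ℝ) (ω : ℂ) (t : ℝ) :
    HasDerivAt (phase x0 ω) (2 * Complex.I * ω * phase x0 ω t) t := by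
  have hlin : HasDerivAt (fun s : ℝ => 2 * Complex.I * ((s : ℂ) - (x0 : ℂ)) * ω)
      (2 * Complex.I * ω) t := by
    simpa using
      (((Complex.ofRealCLM.hasDerivAt (x := t)).sub_const (x0 : ℂ)).const_mul _).mul_const ω
  exact hlin.cexp.congr_deriv (mul_comm _ _)

theorem contDiff_phase (x0 : ℝ) (ω : ℂ) : ContDiff ℝ 1 (phase x0 ω) :=
  Complex.contDiff_exp.comp <|
    (contDiff_const.mul (Complex.ofRealCLM.contDiff.sub contDiff_const)).mul contDiff_const

theorem differentiable_phase (x0 s : ℝ) : Differentiable ℂ fun ω => phase x0 ω s :=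
  Complex.differentiable_exp.comp (by fun_prop)

/-- The Volterra operator on families `f` indexed by the frequency `ω`, in which the conjugation of
`A_ω` is replaced by the reflection `ω ↦ -ω`, so as to preserve holomorphy in `ω`. -/
noncomputable def holoVolterra (x0 : ℝ) (α : ℝ → ℝ) (f : ℂ → ℝ → ℂ) (ω : ℂ) (t : ℝ) : ℂ :=
  ∫ s in x0..t, (α s : ℂ) * phase x0 ω s * f (-ω) s

/-- The iterates of `holoVolterra` on the constant `1`: the entire continuation in `ω` of the
restriction of `Aiter` to real `ω`. -/
noncomputable def holoIter (x0 : ℝ) (α : ℝ → ℝ) (j : ℕ) : ℂ → ℝ → ℂ :=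
  (holoVolterra x0 α)^[j] 1

theorem holoIter_zero (x0 : ℝ) (α : ℝ → ℝ) : holoIter x0 α 0 = 1 := rfl

theorem holoIter_succ (x0 : ℝ) (α : ℝ → ℝ) (j : ℕ) :
    holoIter x0 α (j + 1) = holoVolterra x0 α (holoIter x0 α j) :=
  Function.iterate_succ_apply' _ _ _

theorem conj_holoIter_ofReal (x0 : ℝ) (α : ℝ → ℝ) (j : ℕ) (ω t : ℝ) :
    starRingEnd ℂ (holoIter x0 α j ω t) = holoIter x0 α j (-(ω : ℂ)) t := by
  induction j generalizing ω t with
  | zero => simp [holoIter_zero]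
  | succ j ih =>
    rw [holoIter_succ, holoVolterra, holoVolterra, conj_intervalIntegral]
    refine intervalIntegral.integral_congr fun s _ => ?_
    have ih' := ih (-ω) s
    push_cast at ih'
    simp only [map_mul, Complex.conj_ofReal, conj_phase_ofReal, ih']

theorem Aiter_ofReal_eq_holoIter (x0 : ℝ) (α : ℝ → ℝ) (ω : ℝ) (j : ℕ) :
    Aiter x0 α ω j = holoIter x0 α j ω := by
  induction j with
  | zero => rfl
  | succ j ih =>
    funext t
    rw [holoIter_succ, holoVolterra, Aiter]
    simp only [ih, conj_holoIter_ofReal, phase]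

variable {x0 y : ℝ} {α : ℝ → ℝ}

theorem intervalIntegrable_kernel_mul (hα : IntervalIntegrable α volume x0 y) {g : ℝ → ℂ}
    (hg : ContinuousOn g (Set.uIcc x0 y)) (ω : ℂ) :
    IntervalIntegrable (fun s => (α s : ℂ) * phase x0 ω s * g s) volume x0 y := by
  have hα' : IntervalIntegrable (fun s => (α s : ℂ)) volume x0 y := ⟨hα.1.ofReal, hα.2.ofReal⟩
  exact (hα'.mul_continuousOn (contDiff_phase x0 ω).continuous.continuousOn).mul_continuousOn hg

theorem continuousOn_holoIter (hα : IntervalIntegrable α volume x0 y) (j : ℕ) (ω : ℂ) :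
    ContinuousOn (holoIter x0 α j ω) (Set.uIcc x0 y) := by
  induction j generalizing ω with
  | zero => exact continuousOn_const
  | succ j ih =>
    rw [holoIter_succ]
    exact intervalIntegral.continuousOn_primitive_interval'
      (intervalIntegrable_kernel_mul hα (ih _) ω) Set.left_mem_uIcc

/- The weight `exp (∫ β)` is Picard's device for making the Volterra operator a contraction with
constant `1/2`; it replaces the simplex volumes in the usual bound `(∫ |α|)^j / j!`. -/
theorem norm_holoIter_le_mul_exp (hα : IntervalIntegrable α volume x0 y) {R : ℝ} (j : ℕ) {ω : ℂ}
    (hω : ‖ω‖ ≤ R) {t : ℝ} (ht : t ∈ Set.Icc x0 y) :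
    ‖holoIter x0 α j ω t‖ ≤
      (1 / 2) ^ j * Real.exp (∫ s in x0..t, 2 * (|α s| * Real.exp (2 * (y - x0) * R))) := by
  set β : ℝ → ℝ := fun s => 2 * (|α s| * Real.exp (2 * (y - x0) * R))
  have hβ : IntervalIntegrable β volume x0 t :=
    ((hα.abs.mul_const _).const_mul 2).mono_set
      (Set.uIcc_subset_uIcc_left (Set.Icc_subset_uIcc ht))
  induction j generalizing ω t with
  | zero =>
    have hβ_nonneg : 0 ≤ ∫ s in x0..t, β s :=
      intervalIntegral.integral_nonneg ht.1 fun s _ => by positivity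
    simpa [holoIter_zero] using hβ_nonneg
  | succ j ih =>
    rw [holoIter_succ]
    refine norm_integral_le_mul_exp_of_norm_le ht.1 (by positivity) hβ fun s hs => ?_
    have hs' : s ∈ Set.Icc x0 y := ⟨hs.1.le, hs.2.trans ht.2⟩
    have hβs := hβ.mono_set (Set.uIcc_subset_uIcc_left (Set.Icc_subset_uIcc ⟨hs.1.le, hs.2⟩))
    calc ‖(α s : ℂ) * phase x0 ω s * holoIter x0 α j (-ω) s‖
        ≤ |α s| * Real.exp (2 * (y - x0) * R) * ‖holoIter x0 α j (-ω) s‖ :=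
          norm_kernel_mul_le α hs' hω _
      _ ≤ |α s| * Real.exp (2 * (y - x0) * R) *
            ((1 / 2) ^ j * Real.exp (∫ r in x0..s, β r)) := by
          gcongr
          exact ih (by rwa [norm_neg]) hs' hβs
      _ = (1 / 2) ^ (j + 1) * (β s * Real.exp (∫ r in x0..s, β r)) := by ring

theorem exists_norm_holoIter_le (hα : IntervalIntegrable α volume x0 y) (R : ℝ) :
    ∃ C, ∀ j ω t, ‖ω‖ ≤ R → t ∈ Set.Icc x0 y → ‖holoIter x0 α j ω t‖ ≤ (1 / 2) ^ j * C := by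
  refine ⟨Real.exp (∫ s in x0..y, 2 * (|α s| * Real.exp (2 * (y - x0) * R))),
    fun j ω t hω ht => (norm_holoIter_le_mul_exp hα j hω ht).trans ?_⟩
  gcongr
  exact intervalIntegral.integral_mono_interval le_rfl ht.1 ht.2
    (.of_forall fun s => by positivity) ((hα.abs.mul_const _).const_mul 2)

theorem differentiable_holoIter (hxy : x0 ≤ y) (hα : IntervalIntegrable α volume x0 y) (j : ℕ) :
    Differentiable ℂ fun ω => holoIter x0 α j ω y := by
  induction j generalizing y with
  | zero => exact differentiable_const _
  | succ j ih =>
    simp only [holoIter_succ, holoVolterra, intervalIntegral.integral_of_le hxy]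
    refine differentiable_integral_of_locally_dominated (fun ω => ?_) ?_ fun R => ?_
    · exact (intervalIntegrable_kernel_mul hα (continuousOn_holoIter hα j _) ω).1.1
    · filter_upwards [ae_restrict_mem measurableSet_Ioc] with s hs
      have hαs : IntervalIntegrable α volume x0 s :=
        hα.mono_set (Set.uIcc_subset_uIcc_left (Set.Icc_subset_uIcc (Set.Ioc_subset_Icc_self hs)))
      exact ((differentiable_phase x0 s).const_mul _).mul
        ((ih hs.1.le hαs).comp differentiable_neg)
    · obtain ⟨C, hC⟩ := exists_norm_holoIter_le hα R
      refine ⟨fun s => |α s| * Real.exp (2 * (y - x0) * R) * ((1 / 2) ^ j * C),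
        (hα.1.abs.mul_const _).mul_const _, ?_⟩
      filter_upwards [ae_restrict_mem measurableSet_Ioc] with s hs ω hω
      have hs' := Set.Ioc_subset_Icc_self hs
      refine (norm_kernel_mul_le α hs' hω _).trans ?_
      gcongr
      exact hC j (-ω) s (by rwa [norm_neg]) hs'

/-- The entire continuation in `ω` of the harmonic exponential `harmE x0 t α ω`, which is itself not
holomorphic in `ω`. -/
noncomputable def holoE (x0 : ℝ) (α : ℝ → ℝ) (ω : ℂ) (t : ℝ) : ℂ :=
  ∑' j, holoIter x0 α j ω t

theorem harmE_ofReal_eq_holoE (x0 t : ℝ) (α : ℝ → ℝ) (ω : ℝ) :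
    harmE x0 t α ω = holoE x0 α ω t := by
  simp only [harmE, holoE, Aiter_ofReal_eq_holoIter]

theorem conj_holoE_ofReal (x0 : ℝ) (α : ℝ → ℝ) (ω t : ℝ) :
    starRingEnd ℂ (holoE x0 α ω t) = holoE x0 α (-(ω : ℂ)) t := by
  simp only [holoE, Complex.conj_tsum, conj_holoIter_ofReal]

theorem summable_half_pow_mul (C : ℝ) : Summable fun j : ℕ => (1 / 2 : ℝ) ^ j * C :=
  summable_geometric_two.mul_right C

theorem summable_holoIter (hα : IntervalIntegrable α volume x0 y) (ω : ℂ) {t : ℝ}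
    (ht : t ∈ Set.Icc x0 y) : Summable fun j => holoIter x0 α j ω t := by
  obtain ⟨C, hC⟩ := exists_norm_holoIter_le hα ‖ω‖
  exact .of_norm_bounded (summable_half_pow_mul C) fun j => hC j ω t le_rfl ht

theorem continuousOn_holoE (hxy : x0 ≤ y) (hα : IntervalIntegrable α volume x0 y) (ω : ℂ) :
    ContinuousOn (holoE x0 α ω) (Set.uIcc x0 y) := by
  obtain ⟨C, hC⟩ := exists_norm_holoIter_le hα ‖ω‖
  refine continuousOn_tsum (fun j => continuousOn_holoIter hα j ω) (summable_half_pow_mul C)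
    fun j t ht => hC j ω t le_rfl ?_
  rwa [Set.uIcc_of_le hxy] at ht

theorem differentiable_holoE (hxy : x0 ≤ y) (hα : IntervalIntegrable α volume x0 y) :
    Differentiable ℂ fun ω => holoE x0 α ω y := by
  intro ω
  obtain ⟨C, hC⟩ := exists_norm_holoIter_le hα (‖ω‖ + 1)
  have hball : DifferentiableOn ℂ (fun ω => holoE x0 α ω y) (Metric.ball 0 (‖ω‖ + 1)) :=
    Complex.differentiableOn_tsum_of_summable_norm (summable_half_pow_mul C)
      (fun j => (differentiable_holoIter hxy hα j).differentiableOn) Metric.isOpen_ball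
      fun j z hz => hC j z y (mem_ball_zero_iff.1 hz).le (Set.right_mem_Icc.2 hxy)
  exact hball.differentiableAt (Metric.isOpen_ball.mem_nhds (by simp))

theorem holoE_eq_one_add_holoVolterra (hxy : x0 ≤ y) (hα : IntervalIntegrable α volume x0 y)
    (ω : ℂ) : holoE x0 α ω y = 1 + holoVolterra x0 α (holoE x0 α) ω y := by
  obtain ⟨C, hC⟩ := exists_norm_holoIter_le hα ‖ω‖
  have hker : IntervalIntegrable (fun s => ‖(α s : ℂ) * phase x0 ω s‖) volume x0 y := by
    simpa only [mul_one] using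
      (intervalIntegrable_kernel_mul hα (continuousOn_const (c := 1)) ω).norm
  have hmem {s : ℝ} (hs : s ∈ Set.uIoc x0 y) : s ∈ Set.Icc x0 y :=
    Set.Ioc_subset_Icc_self (Set.uIoc_of_le hxy ▸ hs)
  have hsum : HasSum (fun j => holoIter x0 α (j + 1) ω y)
      (holoVolterra x0 α (holoE x0 α) ω y) := by
    simp only [holoIter_succ, holoVolterra]
    refine intervalIntegral.hasSum_integral_of_dominated_convergence
      (fun j s => ‖(α s : ℂ) * phase x0 ω s‖ * ((1 / 2) ^ j * C)) (fun j => ?_)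
      (fun j => .of_forall fun s hs => ?_) (.of_forall fun s _ => ?_) ?_
      (.of_forall fun s hs => ?_)
    · exact (intervalIntegrable_kernel_mul hα
        (continuousOn_holoIter hα j _) ω).def'.aestronglyMeasurable
    · rw [norm_mul]
      gcongr
      exact hC j (-ω) s (norm_neg ω).le (hmem hs)
    · exact (summable_half_pow_mul C).mul_left _
    · simp only [tsum_mul_left]
      exact hker.mul_const _
    · exact (summable_holoIter hα (-ω) (hmem hs)).hasSum.mul_left _
  rw [holoE, (summable_holoIter hα ω (Set.right_mem_Icc.2 hxy)).tsum_eq_zero_add, hsum.tsum_eq,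
    holoIter_zero, Pi.one_apply, Pi.one_apply]

theorem holoE_neg_eq_one_sub_holoVolterra (hxy : x0 ≤ y) (hα : IntervalIntegrable α volume x0 y)
    (ω : ℂ) : holoE x0 (-α) ω y = 1 - holoVolterra x0 α (holoE x0 (-α)) ω y := by
  rw [holoE_eq_one_add_holoVolterra hxy hα.neg, sub_eq_add_neg, holoVolterra, holoVolterra,
    ← intervalIntegral.integral_neg]
  simp only [Pi.neg_apply, Complex.ofReal_neg, neg_mul]

/-- The hyperbolic cosine of `α`: the part of `holoE` that is even in `α`. -/
noncomputable def harmCosh (x0 : ℝ) (α : ℝ → ℝ) (ω : ℂ) (t : ℝ) : ℂ :=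
  (holoE x0 α ω t + holoE x0 (-α) ω t) / 2

/-- The hyperbolic sine of `α`: the part of `holoE` that is odd in `α`. -/
noncomputable def harmSinh (x0 : ℝ) (α : ℝ → ℝ) (ω : ℂ) (t : ℝ) : ℂ :=
  (holoE x0 α ω t - holoE x0 (-α) ω t) / 2

theorem harmE_sub_div_add (x0 t : ℝ) (α : ℝ → ℝ) (ω : ℝ) :
    (harmE x0 t α ω - harmE x0 t (fun s => -α s) ω) /
        (harmE x0 t α ω + harmE x0 t (fun s => -α s) ω) =
      harmSinh x0 α ω t / harmCosh x0 α ω t := by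
  rw [harmSinh, harmCosh, div_div_div_cancel_right₀ two_ne_zero]
  simp only [harmE_ofReal_eq_holoE]
  rfl

theorem conj_harmSinh_ofReal (x0 : ℝ) (α : ℝ → ℝ) (ω t : ℝ) :
    starRingEnd ℂ (harmSinh x0 α ω t) = harmSinh x0 α (-(ω : ℂ)) t := by
  simp only [harmSinh, map_div₀, map_sub, conj_holoE_ofReal, Complex.conj_ofNat]

theorem differentiable_harmCosh (hxy : x0 ≤ y) (hα : IntervalIntegrable α volume x0 y) :
    Differentiable ℂ fun ω => harmCosh x0 α ω y :=
  ((differentiable_holoE hxy hα).add (differentiable_holoE hxy hα.neg)).div_const 2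

theorem continuousOn_harmCosh (hxy : x0 ≤ y) (hα : IntervalIntegrable α volume x0 y) (ω : ℂ) :
    ContinuousOn (harmCosh x0 α ω) (Set.uIcc x0 y) :=
  ((continuousOn_holoE hxy hα ω).add (continuousOn_holoE hxy hα.neg ω)).div_const 2

theorem continuousOn_harmSinh (hxy : x0 ≤ y) (hα : IntervalIntegrable α volume x0 y) (ω : ℂ) :
    ContinuousOn (harmSinh x0 α ω) (Set.uIcc x0 y) :=
  ((continuousOn_holoE hxy hα ω).sub (continuousOn_holoE hxy hα.neg ω)).div_const 2

theorem harmCosh_eq_one_add_holoVolterra (hxy : x0 ≤ y) (hα : IntervalIntegrable α volume x0 y)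
    (ω : ℂ) : harmCosh x0 α ω y = 1 + holoVolterra x0 α (harmSinh x0 α) ω y := by
  have hlin : holoVolterra x0 α (harmSinh x0 α) ω y =
      (holoVolterra x0 α (holoE x0 α) ω y - holoVolterra x0 α (holoE x0 (-α)) ω y) / 2 := by
    simp only [holoVolterra, harmSinh]
    rw [← intervalIntegral.integral_sub
      (intervalIntegrable_kernel_mul hα (continuousOn_holoE hxy hα _) ω)
      (intervalIntegrable_kernel_mul hα (continuousOn_holoE hxy hα.neg _) ω),
      ← intervalIntegral.integral_div]
    simp only [mul_sub, mul_div_assoc']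
  rw [hlin, harmCosh, holoE_eq_one_add_holoVolterra hxy hα,
    holoE_neg_eq_one_sub_holoVolterra hxy hα]
  ring

theorem harmSinh_eq_holoVolterra (hxy : x0 ≤ y) (hα : IntervalIntegrable α volume x0 y) (ω : ℂ) :
    harmSinh x0 α ω y = holoVolterra x0 α (harmCosh x0 α) ω y := by
  have hlin : holoVolterra x0 α (harmCosh x0 α) ω y =
      (holoVolterra x0 α (holoE x0 α) ω y + holoVolterra x0 α (holoE x0 (-α)) ω y) / 2 := by
    simp only [holoVolterra, harmCosh]
    rw [← intervalIntegral.integral_add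
      (intervalIntegrable_kernel_mul hα (continuousOn_holoE hxy hα _) ω)
      (intervalIntegrable_kernel_mul hα (continuousOn_holoE hxy hα.neg _) ω),
      ← intervalIntegral.integral_div]
    simp only [mul_add, mul_div_assoc']
  rw [hlin, harmSinh, holoE_eq_one_add_holoVolterra hxy hα,
    holoE_neg_eq_one_sub_holoVolterra hxy hα]
  ring

theorem ae_hasDerivAt_holoVolterra {f : ℂ → ℝ → ℂ} (hα : IntervalIntegrable α volume x0 y) (ω : ℂ)
    (hf : ContinuousOn (f (-ω)) (Set.uIcc x0 y)) : ∀ᵐ t, t ∈ Set.uIcc x0 y →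
      HasDerivAt (holoVolterra x0 α f ω) ((α t : ℂ) * phase x0 ω t * f (-ω) t) t := by
  filter_upwards [(intervalIntegrable_kernel_mul hα hf ω).ae_hasDerivAt_integral] with t ht hmem
  exact ht hmem x0 Set.left_mem_uIcc

/- The second component is `phase x0 ω t * harmSinh x0 α (-ω) t` and the first `harmCosh x0 α ω t`,
written as Volterra integrals because those are differentiable almost everywhere on all of `ℝ`. -/
theorem isZakharovShabatSolution_holoVolterra (hxy : x0 ≤ y)
    (hα : IntervalIntegrable α volume x0 y) (ω : ℂ) :
    IsZakharovShabatSolution α ω x0 y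
      (fun t => 1 + holoVolterra x0 α (harmSinh x0 α) ω t)
      (fun t => phase x0 ω t * holoVolterra x0 α (harmCosh x0 α) (-ω) t) where
  fst_ac := (contDiff_const.contDiffOn.absolutelyContinuousOnInterval).fun_add
    (absolutelyContinuousOnInterval_primitive
      (intervalIntegrable_kernel_mul hα (continuousOn_harmSinh hxy hα _) ω))
  snd_ac := (contDiff_phase x0 ω).contDiffOn.absolutelyContinuousOnInterval.fun_smul
    (absolutelyContinuousOnInterval_primitive
      (intervalIntegrable_kernel_mul hα (continuousOn_harmCosh hxy hα _) (-ω)))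
  fst_left := by simp [holoVolterra]
  snd_left := by simp [holoVolterra]
  fst_deriv := by
    filter_upwards [ae_hasDerivAt_holoVolterra hα ω (continuousOn_harmSinh hxy hα _)]
      with t ht hmem
    have hle : x0 ≤ t := (Set.uIcc_of_le hxy ▸ hmem).1
    refine ((ht hmem).const_add 1).congr_deriv ?_
    rw [harmSinh_eq_holoVolterra hle (hα.mono_set (Set.uIcc_subset_uIcc_left hmem)),
      Complex.real_smul, mul_assoc]
  snd_deriv := by
    filter_upwards [ae_hasDerivAt_holoVolterra hα (-ω) (continuousOn_harmCosh hxy hα _)]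
      with t ht hmem
    have hle : x0 ≤ t := (Set.uIcc_of_le hxy ▸ hmem).1
    refine ((hasDerivAt_phase x0 ω t).fun_mul (ht hmem)).congr_deriv ?_
    rw [neg_neg, Complex.real_smul,
      harmCosh_eq_one_add_holoVolterra hle (hα.mono_set (Set.uIcc_subset_uIcc_left hmem))]
    linear_combination (α t : ℂ) * (1 + holoVolterra x0 α (harmSinh x0 α) ω t) *
      phase_mul_phase_neg x0 ω t

theorem one_le_norm_harmCosh (hxy : x0 ≤ y) (hα : IntervalIntegrable α volume x0 y) {ω : ℂ}
    (hω : 0 ≤ ω.im) : 1 ≤ ‖harmCosh x0 α ω y‖ := by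
  rw [harmCosh_eq_one_add_holoVolterra hxy hα]
  exact (isZakharovShabatSolution_holoVolterra hxy hα ω).one_le_norm_fst hxy hω

theorem norm_sq_harmCosh_le (hxy : x0 ≤ y) (hα : IntervalIntegrable α volume x0 y)
    (hα2 : IntervalIntegrable (fun t => α t ^ 2) volume x0 y) {ω : ℂ} (hω : 0 < ω.im) :
    ‖harmCosh x0 α ω y‖ ^ 2 ≤ Real.exp ((∫ t in x0..y, α t ^ 2) / ω.im) := by
  rw [harmCosh_eq_one_add_holoVolterra hxy hα]
  exact (isZakharovShabatSolution_holoVolterra hxy hα ω).norm_sq_fst_le hxy hα2 hω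

theorem norm_sq_harmCosh_ofReal (hxy : x0 ≤ y) (hα : IntervalIntegrable α volume x0 y) (ω : ℝ) :
    ‖harmCosh x0 α ω y‖ ^ 2 = 1 + ‖harmSinh x0 α ω y‖ ^ 2 := by
  have henergy := (isZakharovShabatSolution_holoVolterra hxy hα ω).normSq_sub_normSq
  rw [← harmCosh_eq_one_add_holoVolterra hxy hα, ← harmSinh_eq_holoVolterra hxy hα,
    ← conj_harmSinh_ofReal, norm_mul, norm_phase, Complex.norm_conj] at henergy
  simpa [sub_eq_iff_eq_add] using henergy

theorem norm_sq_harmSinh_div_harmCosh_ofReal (hxy : x0 ≤ y)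
    (hα : IntervalIntegrable α volume x0 y) (ω : ℝ) :
    ‖harmSinh x0 α ω y / harmCosh x0 α ω y‖ ^ 2 = 1 - (‖harmCosh x0 α ω y‖ ^ 2)⁻¹ := by
  have hcosh : 0 < ‖harmCosh x0 α ω y‖ ^ 2 := by
    linarith [norm_sq_harmCosh_ofReal hxy hα ω, sq_nonneg ‖harmSinh x0 α ω y‖]
  rw [norm_div, div_pow, div_eq_iff hcosh.ne', sub_mul, inv_mul_cancel₀ hcosh.ne',
    norm_sq_harmCosh_ofReal hxy hα]
  ring

theorem lintegral_log_norm_harmCosh_le (hxy : x0 ≤ y) (hα : IntervalIntegrable α volume x0 y)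
    (hα2 : IntervalIntegrable (fun t => α t ^ 2) volume x0 y) :
    ∫⁻ ω : ℝ, ENNReal.ofReal (Real.log ‖harmCosh x0 α ω y‖) ≤
      ENNReal.ofReal (Real.pi * ((∫ t in x0..y, α t ^ 2) / 2)) := by
  refine lintegral_ofReal_le_of_im_mul_le (u := fun ω => Real.log ‖harmCosh x0 α ω y‖)
    (fun ω hω => ?_) (fun ω hω => Real.log_nonneg (one_le_norm_harmCosh hxy hα hω))
    fun η hη => ?_
  · refine ((differentiable_harmCosh hxy hα).analyticAt ω).harmonicAt_log_norm ?_
    exact norm_pos_iff.1 (one_pos.trans_le (one_le_norm_harmCosh hxy hα hω))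
  · have him : (η * Complex.I).im = η := by simp
    have hpos : 0 < ‖harmCosh x0 α (η * Complex.I) y‖ :=
      one_pos.trans_le (one_le_norm_harmCosh hxy hα (him.symm ▸ hη.le))
    have hlog := (Real.log_le_iff_le_exp (pow_pos hpos 2)).2
      (norm_sq_harmCosh_le hxy hα hα2 (him.symm ▸ hη))
    rw [him, Real.log_pow, le_div_iff₀ hη] at hlog
    push_cast at hlog
    linarith

theorem integral_neg_log_one_sub_norm_sq_harmSinh_div_harmCosh_le (hxy : x0 ≤ y)
    (hα : IntervalIntegrable α volume x0 y)
    (hα2 : IntervalIntegrable (fun t => α t ^ 2) volume x0 y) :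
    ∫ ω : ℝ, -Real.log (1 - ‖harmSinh x0 α ω y / harmCosh x0 α ω y‖ ^ 2) ≤
      Real.pi * ∫ t in x0..y, α t ^ 2 := by
  have hlog (ω : ℝ) : -Real.log (1 - ‖harmSinh x0 α ω y / harmCosh x0 α ω y‖ ^ 2) =
      2 * Real.log ‖harmCosh x0 α ω y‖ := by
    rw [norm_sq_harmSinh_div_harmCosh_ofReal hxy hα, sub_sub_cancel, Real.log_inv, neg_neg,
      Real.log_pow, Nat.cast_ofNat]
  have hcont : Continuous fun ω : ℝ => ‖harmCosh x0 α ω y‖ :=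
    ((differentiable_harmCosh hxy hα).continuous.comp Complex.continuous_ofReal).norm
  have hnonneg : 0 ≤ ∫ t in x0..y, α t ^ 2 :=
    intervalIntegral.integral_nonneg hxy fun t _ => sq_nonneg _
  have hle : ∫ ω : ℝ, Real.log ‖harmCosh x0 α ω y‖ ≤
      Real.pi * ((∫ t in x0..y, α t ^ 2) / 2) := by
    rw [integral_eq_lintegral_of_nonneg_ae
      (.of_forall fun ω => Real.log_nonneg (one_le_norm_harmCosh hxy hα (by simp)))
      (Real.measurable_log.comp hcont.measurable).aestronglyMeasurable]
    exact ENNReal.toReal_le_of_le_ofReal (by positivity)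
      (lintegral_log_norm_harmCosh_le hxy hα hα2)
  simp only [hlog, integral_const_mul]
  linarith

end Volterra

/-- Theorem (thm-hyperbolic)(iv), the nonlinear Bessel inequality:
`∫_ℝ −log(1 − |Th_α^{(x0,y)}(ω)|²) dω ≤ π ∫_{x0}^y |α|²` (with `|Th| < 1` everywhere). -/
theorem hyperbolic_tangent_bessel_inequality
    (x0 x1 y : ℝ) (hx : x0 < x1) (hy : y ∈ Set.Ioc x0 x1)
    (α : ℝ → ℝ)
    (hα : IntegrableOn α (Set.Ioo x0 x1))
    (hα2 : IntegrableOn (fun x => |α x| ^ 2) (Set.Ioo x0 x1))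
    (Th : ℝ → ℂ)
    (hTh : ∀ ω : ℝ,
      Th ω = (harmE x0 y α (ω : ℂ) - harmE x0 y (fun s => -α s) (ω : ℂ))
              / (harmE x0 y α (ω : ℂ) + harmE x0 y (fun s => -α s) (ω : ℂ))) :
    (∀ ω : ℝ, ‖Th ω‖ < 1) ∧
      (∫ ω : ℝ, -Real.log (1 - ‖Th ω‖ ^ 2)) ≤ Real.pi * ∫ s in x0..y, |α s| ^ 2 := by
  have hxy : x0 ≤ y := hy.1.le
  have hrestrict {f : ℝ → ℝ} (hf : IntegrableOn f (Set.Ioo x0 x1)) :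
      IntervalIntegrable f volume x0 y :=
    (intervalIntegrable_iff_integrableOn_Ioc_of_le hxy).2 <|
      ((integrableOn_Ioc_iff_integrableOn_Ioo (by simp)).2 hf).mono_set
        (Set.Ioc_subset_Ioc_right hy.2)
  have hαy : IntervalIntegrable α volume x0 y := hrestrict hα
  have hTh' (ω : ℝ) : Th ω = harmSinh x0 α ω y / harmCosh x0 α ω y :=
    (hTh ω).trans (harmE_sub_div_add x0 y α ω)
  simp only [sq_abs] at hα2 ⊢
  simp only [hTh']
  refine ⟨fun ω => ?_, integral_neg_log_one_sub_norm_sq_harmSinh_div_harmCosh_le hxy hαy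
    (hrestrict hα2)⟩
  have hcosh : 0 < ‖harmCosh x0 α ω y‖ :=
    one_pos.trans_le (one_le_norm_harmCosh hxy hαy (Complex.ofReal_im ω).ge)
  rw [← sq_lt_one_iff₀ (norm_nonneg _), norm_sq_harmSinh_div_harmCosh_ofReal hxy hαy]
  exact sub_lt_self _ (by positivity)
end

section
/- Fix real numbers x0 < x1 and let ζ : ℝ → ℝ be continuously differentiable with ζ(x) > 0 for all x ∈ [x0, x1]; set α = −ζ′/(2ζ). For n ≥ 1 set Δ_n = (x1 − x0)/(n + 1), y_{n,j} = x0 + j·Δ_n (1 ≤ j ≤ n), and r_{n,j} = ( ζ(y_{n,j} − Δ_n/2) − ζ(y_{n,j} + Δ_n/2) ) / ( ζ(y_{n,j} − Δ_n/2) + ζ(y_{n,j} + Δ_n/2) ). For each n let Ψ_{n,j}, Ψ_{n,j}^* (0 ≤ j ≤ n) be the polynomials defined by Ψ_{n,0} = Ψ_{n,0}^* = 1, Ψ_{n,j+1}(z) = z·Ψ_{n,j}(z) + r_{n,j+1}·Ψ_{n,j}^*(z), Ψ_{n,j+1}^*(z) = Ψ_{n,j}^*(z) + r_{n,j+1}·z·Ψ_{n,j}(z).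 Then for every Ω > 0, sup_{ω ∈ [−Ω, Ω]} | Ψ_{n,n}^*( e^{2iΔ_n ω} ) − E_α^{(x0,x1)}(ω) | → 0 as n → ∞; that is, the dual orthogonal polynomials evaluated at e^{2iΔ_n ω} converge to the harmonic exponential uniformly on compact subsets of ℝ. -/
open MeasureTheory

/-- The associated monic orthogonal polynomials on the unit circle with Verblunsky
coefficients `-r 1, …, -r n`, together with their duals:
`(opucPsi r j).1 = Ψ_j`, `(opucPsi r j).2 = Ψ_j^*`. -/
noncomputable def opucPsi (r : ℕ → ℝ) : ℕ → (ℂ → ℂ) × (ℂ → ℂ)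
  | 0 => (fun _ => 1, fun _ => 1)
  | j + 1 =>
      (fun z => z * (opucPsi r j).1 z + (r (j + 1) : ℂ) * (opucPsi r j).2 z,
       fun z => (opucPsi r j).2 z + (r (j + 1) : ℂ) * z * (opucPsi r j).1 z)

/-!
With `ζ₋`, `ζ₊` the values of `ζ` at the two ends of a cell, the reflection coefficient is
`(ζ₋ - ζ₊) / (ζ₋ + ζ₊) = tanh ((log ζ₋ - log ζ₊) / 2) = tanh (∫ α)`, the integral being over that
cell. On the unit circle `Ψ_j(z) = z^j conj (Ψ_j^*(z))`, so the recursion for the dual polynomials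
reads `Ψ_{j+1}^* = Ψ_j^* + tanh (∫ α) z^{j+1} conj Ψ_j^*`. At `z = e^{2iΔω}` this is an explicit
Euler scheme for the Volterra equation `E(t) = 1 + ∫_{x0}^t α(s) e^{2i(s-x0)ω} conj (E(s)) ds`. Over
a cell of length `Δ` and mass `a = ∫ |α|` its truncation error is `O(a (|ω| Δ + a))`. The masses add
up to at most `∫ |α|` and are uniformly small for small `Δ`, so Grönwall's inequality gives
convergence.
-/

open Set Filter Topology
open scoped ComplexConjugate Interval

section AbsoluteContinuity

variable {f φ g : ℝ → ℝ} {a b : ℝ}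

lemma absolutelyContinuousOnInterval_comp_s19 (hφ : ContDiffOn ℝ 1 φ (f '' [[a, b]]))
    (hf : AbsolutelyContinuousOnInterval f a b) :
    AbsolutelyContinuousOnInterval (φ ∘ f) a b := by
  have hconv : Convex ℝ (f '' [[a, b]]) :=
    (isPreconnected_uIcc.image f hf.continuousOn).ordConnected.convex
  have hcompact : IsCompact (f '' [[a, b]]) := isCompact_uIcc.image_of_continuousOn hf.continuousOn
  obtain ⟨K, hK⟩ := hφ.exists_lipschitzOnWith one_ne_zero hconv hcompact
  have hbound : Tendsto (fun E : ℕ × (ℕ → ℝ × ℝ) ↦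
      (K : ℝ) * ∑ i ∈ Finset.range E.1, dist (f (E.2 i).1) (f (E.2 i).2))
      (AbsolutelyContinuousOnInterval.totalLengthFilter ⊓
        𝓟 (AbsolutelyContinuousOnInterval.disjWithin a b)) (𝓝 0) := by
    simpa using Tendsto.const_mul (K : ℝ) hf
  refine squeeze_zero' (.of_forall fun E ↦ by positivity) ?_ hbound
  filter_upwards [mem_inf_of_right (mem_principal_self _)] with E hE
  rw [Finset.mul_sum]
  exact Finset.sum_le_sum fun i hi ↦ hK.dist_le_mul _ (mem_image_of_mem f (hE.1 i hi).1) _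
    (mem_image_of_mem f (hE.1 i hi).2)

lemma integral_deriv_comp_mul_deriv_of_absolutelyContinuous
    (hφ : ∀ y ∈ f '' [[a, b]], ContDiffAt ℝ 1 φ y) (hf : AbsolutelyContinuousOnInterval f a b) :
    ∫ x in a..b, deriv φ (f x) * deriv f x = φ (f b) - φ (f a) := by
  have hac := absolutelyContinuousOnInterval_comp_s19 (fun y hy ↦ (hφ y hy).contDiffWithinAt) hf
  refine Eq.trans ?_ hac.integral_deriv_eq_sub
  refine intervalIntegral.integral_congr_ae ?_
  filter_upwards [hf.ae_differentiableAt] with x hx hmem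
  have hmem' := uIoc_subset_uIcc hmem
  exact (deriv_comp x ((hφ _ (mem_image_of_mem f hmem')).differentiableAt one_ne_zero)
    (hx hmem')).symm

lemma integral_mul_primitive_pow (hg : IntervalIntegrable g volume a b) (j : ℕ) :
    ∫ s in a..b, g s * (∫ u in a..s, g u) ^ j = (∫ u in a..b, g u) ^ (j + 1) / (j + 1) := by
  have hac := hg.absolutelyContinuousOnInterval_intervalIntegral left_mem_uIcc
  have hchain := integral_deriv_comp_mul_deriv_of_absolutelyContinuous
    (φ := fun y ↦ y ^ (j + 1) / (j + 1)) (fun y _ ↦ by fun_prop) hac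
  simp only [intervalIntegral.integral_same, ne_eq, Nat.succ_ne_zero, not_false_eq_true,
    zero_pow, zero_div, sub_zero] at hchain
  rw [← hchain]
  refine intervalIntegral.integral_congr_ae ?_
  filter_upwards [hg.ae_hasDerivAt_integral] with s hs hmem
  rw [(hs (uIoc_subset_uIcc hmem) a left_mem_uIcc).deriv]
  have : (j : ℝ) + 1 ≠ 0 := by positivity
  simp only [deriv_div_const, differentiableAt_fun_id, deriv_fun_pow, Nat.cast_add, Nat.cast_one,
    add_tsub_cancel_right, deriv_id'', mul_one]
  field_simp

lemma integral_neg_half_logDeriv (hf : AbsolutelyContinuousOnInterval f a b)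
    (hpos : ∀ x ∈ [[a, b]], 0 < f x) :
    ∫ x in a..b, -deriv f x / (2 * f x) = (Real.log (f a) - Real.log (f b)) / 2 := by
  have hlog := integral_deriv_comp_mul_deriv_of_absolutelyContinuous
    (φ := Real.log) (forall_mem_image.2 fun x hx ↦ Real.contDiffAt_log.2 (hpos x hx).ne') hf
  calc ∫ x in a..b, -deriv f x / (2 * f x)
      = ∫ x in a..b, -(1 / 2) * (deriv Real.log (f x) * deriv f x) := by
        congr with x
        rw [Real.deriv_log]
        field_simp
    _ = (Real.log (f a) - Real.log (f b)) / 2 := by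
        rw [intervalIntegral.integral_const_mul, hlog]
        ring

lemma intervalIntegrable_neg_half_logDeriv (hf : AbsolutelyContinuousOnInterval f a b)
    (hpos : ∀ x ∈ [[a, b]], 0 < f x) :
    IntervalIntegrable (fun x ↦ -deriv f x / (2 * f x)) volume a b := by
  simp_rw [div_eq_mul_inv]
  exact hf.intervalIntegrable_deriv.neg.mul_continuousOn
    ((continuousOn_const.mul hf.continuousOn).inv₀ fun x hx ↦ by simpa using (hpos x hx).ne')

end AbsoluteContinuity

section Tanh

lemma tanh_half_log_sub_log {p q : ℝ} (hp : 0 < p) (hq : 0 < q) :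
    Real.tanh ((Real.log p - Real.log q) / 2) = (p - q) / (p + q) := by
  obtain ⟨u, rfl⟩ : ∃ u, Real.exp (2 * u) = p := ⟨Real.log p / 2, by
    rw [mul_div_cancel₀ _ two_ne_zero, Real.exp_log hp]⟩
  obtain ⟨v, rfl⟩ : ∃ v, Real.exp (2 * v) = q := ⟨Real.log q / 2, by
    rw [mul_div_cancel₀ _ two_ne_zero, Real.exp_log hq]⟩
  rw [Real.log_exp, Real.log_exp, Real.tanh_eq, show (2 * u - 2 * v) / 2 = u - v by ring, neg_sub,
    Real.exp_sub, Real.exp_sub, two_mul, two_mul, Real.exp_add, Real.exp_add]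
  field_simp

lemma hasDerivAt_tanh (x : ℝ) : HasDerivAt Real.tanh (1 - Real.tanh x ^ 2) x := by
  have h := (Real.hasDerivAt_sinh x).div (Real.hasDerivAt_cosh x) (Real.cosh_pos x).ne'
  rw [show Real.tanh = Real.sinh / Real.cosh from funext Real.tanh_eq_sinh_div_cosh]
  convert! h using 1
  have := (Real.cosh_pos x).ne'
  simp only [Pi.div_apply]
  field_simp

lemma tanh_sq_le_one (x : ℝ) : Real.tanh x ^ 2 ≤ 1 :=
  (sq_le_one_iff_abs_le_one _).2 (abs_le.2 ⟨(Real.neg_one_lt_tanh x).le, (Real.tanh_lt_one x).le⟩)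

lemma abs_tanh_le_abs (x : ℝ) : |Real.tanh x| ≤ |x| := by
  have h := convex_univ.norm_image_sub_le_of_norm_hasDerivWithin_le (C := 1)
    (fun y _ ↦ (hasDerivAt_tanh y).hasDerivWithinAt)
    (fun y _ ↦ by
      rw [Real.norm_eq_abs, abs_le]
      constructor <;> linarith [tanh_sq_le_one y, sq_nonneg (Real.tanh y)])
    (mem_univ 0) (mem_univ x)
  simpa using h

lemma abs_sub_tanh_le_sq (x : ℝ) : |x - Real.tanh x| ≤ x ^ 2 := by
  have h := (convex_Icc (-|x|) |x|).norm_image_sub_le_of_norm_hasDerivWithin_le (C := |x|)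
    (f := fun y ↦ y - Real.tanh y) (x := 0) (y := x)
    (fun y _ ↦ ((hasDerivAt_id y).sub (hasDerivAt_tanh y)).hasDerivWithinAt)
    (fun y hy ↦ by
      calc ‖1 - (1 - Real.tanh y ^ 2)‖ = |Real.tanh y| * |Real.tanh y| := by
            rw [sub_sub_cancel, Real.norm_eq_abs, sq, abs_mul]
        _ ≤ 1 * |y| :=
            mul_le_mul ((sq_le_one_iff_abs_le_one _).1 (tanh_sq_le_one y)) (abs_tanh_le_abs y)
              (abs_nonneg _) zero_le_one
        _ ≤ |x| := by rw [one_mul]; exact abs_le.2 hy)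
    (by simp) (abs_le.1 le_rfl)
  simpa [← sq] using h

end Tanh

lemma discrete_gronwall_of_lt {u b c : ℕ → ℝ} {n : ℕ} (hu₀ : ∀ j, 0 ≤ u j)
    (hu : ∀ j < n, u (j + 1) ≤ (1 + c j) * u j + b j) (hc : ∀ j, 0 ≤ c j) (hb : ∀ j, 0 ≤ b j) :
    u n ≤ (u 0 + ∑ j ∈ Finset.range n, b j) * Real.exp (∑ j ∈ Finset.range n, c j) := by
  -- Freezing `u` from `n` on preserves the recursive inequality.
  have h := discrete_gronwall (u := fun j ↦ u (min j n)) (n₀ := 0) (hu₀ _) (c := c) (b := b)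
    (fun j _ ↦ ?_) (fun j _ ↦ hc j) (fun j _ ↦ hb j) n.zero_le
  · simpa using h
  · rcases lt_or_ge j n with hj | hj
    · simpa [Nat.min_eq_left hj, hj.le] using hu j hj
    · simp only [min_eq_right hj, min_eq_right (hj.trans j.le_succ)]
      nlinarith [mul_nonneg (hc j) (hu₀ n), hb j]

lemma intervalIntegrable_of_mem_Icc {E : Type*} [NormedAddCommGroup E] {f : ℝ → E} {a b s t : ℝ}
    (hf : IntervalIntegrable f volume a b) (hs : s ∈ Icc a b) (ht : t ∈ Icc a b) :
    IntervalIntegrable f volume s t :=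
  hf.mono_set (uIcc_subset_uIcc (Icc_subset_uIcc hs) (Icc_subset_uIcc ht))

lemma integral_abs_le_of_mem_Icc {g : ℝ → ℝ} {a b s t : ℝ} (hg : IntervalIntegrable g volume a b)
    (hs : s ∈ Icc a b) (ht : t ∈ Icc a b) (hst : s ≤ t) :
    ∫ u in s..t, |g u| ≤ ∫ u in a..b, |g u| :=
  intervalIntegral.integral_mono_interval hs.1 hst ht.2 (.of_forall fun _ ↦ abs_nonneg _) hg.abs

lemma exists_pos_forall_integral_abs_lt {g : ℝ → ℝ} {a b : ℝ} (hg : IntervalIntegrable g volume a b)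
    {η : ℝ} (hη : 0 < η) :
    ∃ δ > 0, ∀ s ∈ Icc a b, ∀ t ∈ Icc a b, s ≤ t → t - s < δ → ∫ u in s..t, |g u| < η := by
  have huc := (hg.abs.absolutelyContinuousOnInterval_intervalIntegral
    left_mem_uIcc).uniformContinuousOn
  obtain ⟨δ, hδ, h⟩ := Metric.uniformContinuousOn_iff.1 huc η hη
  refine ⟨δ, hδ, fun s hs t ht hst hlt ↦ ?_⟩
  have ha : a ∈ Icc a b := ⟨le_rfl, hs.1.trans hs.2⟩
  calc ∫ u in s..t, |g u| = (∫ u in a..t, |g u|) - ∫ u in a..s, |g u| :=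
        (intervalIntegral.integral_interval_sub_left (intervalIntegrable_of_mem_Icc hg.abs ha ht)
          (intervalIntegrable_of_mem_Icc hg.abs ha hs)).symm
    _ ≤ dist (∫ u in a..t, |g u|) (∫ u in a..s, |g u|) := le_abs_self _
    _ < η := h t (Icc_subset_uIcc ht) s (Icc_subset_uIcc hs) (by
        rwa [Real.dist_eq, abs_of_nonneg (sub_nonneg.2 hst)])

section Phase

/-- The phase `e^{2i(s - x0)ω}` at a real frequency `ω`, written exactly as in the integrand of
`Aiter` so that the two agree definitionally. -/
noncomputable def harmPhase (x0 ω s : ℝ) : ℂ :=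
  Complex.exp (2 * Complex.I * ((s : ℂ) - (x0 : ℂ)) * ω)

variable (x0 ω : ℝ)

lemma continuous_harmPhase : Continuous (harmPhase x0 ω) := by
  unfold harmPhase
  fun_prop

lemma norm_harmPhase (s : ℝ) : ‖harmPhase x0 ω s‖ = 1 := by
  rw [harmPhase, show 2 * Complex.I * ((s : ℂ) - x0) * ω = (2 * (s - x0) * ω : ℝ) * Complex.I by
    push_cast; ring, Complex.norm_exp_ofReal_mul_I]

lemma norm_harmPhase_sub_le (s t : ℝ) :
    ‖harmPhase x0 ω s - harmPhase x0 ω t‖ ≤ 2 * |ω| * |s - t| := by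
  have hfactor : harmPhase x0 ω s - harmPhase x0 ω t
      = harmPhase x0 ω t * (Complex.exp (Complex.I * (2 * (s - t) * ω : ℝ)) - 1) := by
    rw [mul_sub_one, harmPhase, harmPhase, ← Complex.exp_add]
    congr 2
    push_cast
    ring
  calc ‖harmPhase x0 ω s - harmPhase x0 ω t‖
      ≤ ‖2 * (s - t) * ω‖ := by
        rw [hfactor, norm_mul, norm_harmPhase, one_mul]
        exact Real.norm_exp_I_mul_ofReal_sub_one_le
    _ = 2 * |ω| * |s - t| := by
        rw [Real.norm_eq_abs, abs_mul, abs_mul, abs_two]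
        ring

variable {x0 ω}

lemma harmPhase_add_nat_mul (D : ℝ) (j : ℕ) :
    harmPhase x0 ω (x0 + j * D) = Complex.exp (2 * Complex.I * (D : ℂ) * (ω : ℂ)) ^ j := by
  rw [harmPhase, ← Complex.exp_nat_mul]
  congr 1
  push_cast
  ring

lemma norm_mul_harmPhase_mul_conj (c s : ℝ) (w : ℂ) :
    ‖(c : ℂ) * harmPhase x0 ω s * conj w‖ = |c| * ‖w‖ := by
  rw [norm_mul, norm_mul, norm_harmPhase, mul_one, RCLike.norm_conj, Complex.norm_real,
    Real.norm_eq_abs]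

lemma intervalIntegrable_mul_harmPhase_mul_conj {α : ℝ → ℝ} {f : ℝ → ℂ} {a b : ℝ}
    (hα : IntervalIntegrable α volume a b) (hf : ContinuousOn f [[a, b]]) :
    IntervalIntegrable (fun s ↦ (α s : ℂ) * harmPhase x0 ω s * conj (f s)) volume a b := by
  have hα' : IntervalIntegrable (fun s ↦ (α s : ℂ)) volume a b := ⟨hα.1.ofReal, hα.2.ofReal⟩
  simp_rw [mul_assoc]
  exact hα'.mul_continuousOn
    ((continuous_harmPhase x0 ω).continuousOn.mul (Complex.continuous_conj.comp_continuousOn hf))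

end Phase

section HarmonicExponential

variable {x0 x1 s t : ℝ} {α : ℝ → ℝ} (ω : ℝ)

lemma Aiter_succ (j : ℕ) (t : ℝ) :
    Aiter x0 α ω (j + 1) t
      = ∫ s in x0..t, (α s : ℂ) * harmPhase x0 ω s * conj (Aiter x0 α ω j s) :=
  rfl

lemma harmE_self (z : ℂ) : harmE x0 x0 α z = 1 := by
  rw [harmE, tsum_eq_single 0 fun j hj ↦ ?_, Aiter]
  obtain ⟨k, rfl⟩ := Nat.exists_eq_succ_of_ne_zero hj
  exact intervalIntegral.integral_same

lemma continuousOn_Aiter (hα : IntervalIntegrable α volume x0 x1) (j : ℕ) :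
    ContinuousOn (Aiter x0 α ω j) [[x0, x1]] := by
  induction j with
  | zero => exact continuousOn_const
  | succ j ih =>
    exact intervalIntegral.continuousOn_primitive_interval'
      (intervalIntegrable_mul_harmPhase_mul_conj hα ih) left_mem_uIcc

lemma norm_Aiter_le (hα : IntervalIntegrable α volume x0 x1) (j : ℕ) (ht : t ∈ Icc x0 x1) :
    ‖Aiter x0 α ω j t‖ ≤ (∫ s in x0..t, |α s|) ^ j / j.factorial := by
  induction j generalizing t with
  | zero => simp [Aiter]
  | succ j ih =>
    have hαt : IntervalIntegrable α volume x0 t :=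
      intervalIntegrable_of_mem_Icc hα ⟨le_rfl, ht.1.trans ht.2⟩ ht
    have hint : IntervalIntegrable
        (fun s ↦ |α s| * ((∫ u in x0..s, |α u|) ^ j / j.factorial)) volume x0 t :=
      hαt.abs.mul_continuousOn (((intervalIntegral.continuousOn_primitive_interval' hαt.abs
        left_mem_uIcc).pow j).div_const _)
    calc ‖Aiter x0 α ω (j + 1) t‖
        ≤ ∫ s in x0..t, |α s| * ((∫ u in x0..s, |α u|) ^ j / j.factorial) := by
          rw [Aiter_succ]
          refine intervalIntegral.norm_integral_le_of_norm_le ht.1 (.of_forall fun s hs ↦ ?_) hint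
          rw [norm_mul_harmPhase_mul_conj]
          gcongr
          exact ih ⟨hs.1.le, hs.2.trans ht.2⟩
      _ = (∫ s in x0..t, |α s|) ^ (j + 1) / (j + 1).factorial := by
          simp_rw [← mul_div_assoc]
          rw [intervalIntegral.integral_div, integral_mul_primitive_pow hαt.abs, div_div,
            Nat.factorial_succ, Nat.cast_mul, Nat.cast_succ]

lemma norm_Aiter_le_of_mem_Icc (hα : IntervalIntegrable α volume x0 x1) (j : ℕ)
    (ht : t ∈ Icc x0 x1) :
    ‖Aiter x0 α ω j t‖ ≤ (∫ s in x0..x1, |α s|) ^ j / j.factorial := by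
  refine (norm_Aiter_le ω hα j ht).trans ?_
  have hnonneg : 0 ≤ ∫ s in x0..t, |α s| :=
    intervalIntegral.integral_nonneg ht.1 fun _ _ ↦ abs_nonneg _
  gcongr
  exact integral_abs_le_of_mem_Icc hα ⟨le_rfl, ht.1.trans ht.2⟩ ht ht.1

lemma summable_Aiter (hα : IntervalIntegrable α volume x0 x1) (ht : t ∈ Icc x0 x1) :
    Summable fun j ↦ Aiter x0 α ω j t :=
  .of_norm_bounded (Real.summable_pow_div_factorial _)
    fun j ↦ norm_Aiter_le_of_mem_Icc ω hα j ht

lemma norm_harmE_le (hα : IntervalIntegrable α volume x0 x1) (ht : t ∈ Icc x0 x1) :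
    ‖harmE x0 t α ω‖ ≤ Real.exp (∫ s in x0..x1, |α s|) := by
  rw [Real.exp_eq_exp_ℝ, NormedSpace.exp_eq_tsum_div]
  exact tsum_of_norm_bounded (Real.summable_pow_div_factorial _).hasSum
    fun j ↦ norm_Aiter_le_of_mem_Icc ω hα j ht

lemma continuousOn_harmE (hα : IntervalIntegrable α volume x0 x1) :
    ContinuousOn (fun t ↦ harmE x0 t α ω) (Icc x0 x1) :=
  continuousOn_tsum (fun j ↦ (continuousOn_Aiter ω hα j).mono Icc_subset_uIcc)
    (Real.summable_pow_div_factorial _) fun j _ ht ↦ norm_Aiter_le_of_mem_Icc ω hα j ht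

lemma intervalIntegrable_harmE_integrand (hα : IntervalIntegrable α volume x0 x1)
    (hs : s ∈ Icc x0 x1) (ht : t ∈ Icc x0 x1) :
    IntervalIntegrable (fun u ↦ (α u : ℂ) * harmPhase x0 ω u * conj (harmE x0 u α ω))
      volume s t :=
  intervalIntegrable_mul_harmPhase_mul_conj (intervalIntegrable_of_mem_Icc hα hs ht)
    ((continuousOn_harmE ω hα).mono (uIcc_subset_Icc hs ht))

lemma harmE_eq_one_add_integral (hα : IntervalIntegrable α volume x0 x1) (ht : t ∈ Icc x0 x1) :
    harmE x0 t α ω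
      = 1 + ∫ s in x0..t, (α s : ℂ) * harmPhase x0 ω s * conj (harmE x0 s α ω) := by
  have hαt : IntervalIntegrable α volume x0 t :=
    intervalIntegrable_of_mem_Icc hα ⟨le_rfl, ht.1.trans ht.2⟩ ht
  have hmem : ∀ s ∈ Ι x0 t, s ∈ Icc x0 x1 := fun s hs ↦ by
    rw [uIoc_of_le ht.1] at hs
    exact ⟨hs.1.le, hs.2.trans ht.2⟩
  have htail : HasSum (fun j ↦ Aiter x0 α ω (j + 1) t)
      (∫ s in x0..t, (α s : ℂ) * harmPhase x0 ω s * conj (harmE x0 s α ω)) := by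
    simp_rw [Aiter_succ]
    refine intervalIntegral.hasSum_integral_of_dominated_convergence
      (fun j s ↦ |α s| * ((∫ u in x0..x1, |α u|) ^ j / j.factorial)) (fun j ↦ ?_)
      (fun j ↦ .of_forall fun s hs ↦ ?_)
      (.of_forall fun s _ ↦ (Real.summable_pow_div_factorial _).mul_left _) ?_
      (.of_forall fun s hs ↦ ?_)
    · exact (intervalIntegrable_mul_harmPhase_mul_conj hαt ((continuousOn_Aiter ω hα j).mono
        (uIcc_subset_uIcc_left (Icc_subset_uIcc ht)))).aestronglyMeasurable_restrict_uIoc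
    · rw [norm_mul_harmPhase_mul_conj]
      gcongr
      exact norm_Aiter_le_of_mem_Icc ω hα j (hmem s hs)
    · simp_rw [tsum_mul_left]
      exact hαt.abs.mul_const _
    · exact (Complex.hasSum_conj'.2
        (by simpa using! (summable_Aiter ω hα (hmem s hs)).hasSum)).mul_left _
  rw [← htail.tsum_eq]
  exact (summable_Aiter ω hα ht).tsum_eq_zero_add

lemma harmE_sub_harmE (hα : IntervalIntegrable α volume x0 x1) (hs : s ∈ Icc x0 x1)
    (ht : t ∈ Icc x0 x1) :
    harmE x0 t α ω - harmE x0 s α ω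
      = ∫ u in s..t, (α u : ℂ) * harmPhase x0 ω u * conj (harmE x0 u α ω) := by
  have h0 : x0 ∈ Icc x0 x1 := ⟨le_rfl, hs.1.trans hs.2⟩
  rw [harmE_eq_one_add_integral ω hα ht, harmE_eq_one_add_integral ω hα hs,
    add_sub_add_left_eq_sub]
  exact intervalIntegral.integral_interval_sub_left
    (intervalIntegrable_harmE_integrand ω hα h0 ht) (intervalIntegrable_harmE_integrand ω hα h0 hs)

lemma norm_harmE_sub_harmE_le (hα : IntervalIntegrable α volume x0 x1) (hs : s ∈ Icc x0 x1)
    (ht : t ∈ Icc x0 x1) (hst : s ≤ t) :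
    ‖harmE x0 t α ω - harmE x0 s α ω‖
      ≤ Real.exp (∫ u in x0..x1, |α u|) * ∫ u in s..t, |α u| := by
  rw [harmE_sub_harmE ω hα hs ht, mul_comm, ← intervalIntegral.integral_mul_const]
  refine intervalIntegral.norm_integral_le_of_norm_le hst (.of_forall fun u hu ↦ ?_)
    ((intervalIntegrable_of_mem_Icc hα hs ht).abs.mul_const _)
  rw [norm_mul_harmPhase_mul_conj]
  gcongr
  exact norm_harmE_le ω hα ⟨hs.1.trans hu.1.le, hu.2.trans ht.2⟩

end HarmonicExponential

section EulerScheme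

variable {x0 x1 : ℝ} {α : ℝ → ℝ} {ω : ℝ}

lemma norm_harmPhase_mul_conj_harmE_sub_le (hα : IntervalIntegrable α volume x0 x1) {s t p u : ℝ}
    (hs : s ∈ Icc x0 x1) (ht : t ∈ Icc x0 x1) (hp : p ∈ Icc s t) (hu : u ∈ Icc s t) :
    ‖harmPhase x0 ω u * conj (harmE x0 u α ω) - harmPhase x0 ω p * conj (harmE x0 s α ω)‖
      ≤ Real.exp (∫ v in x0..x1, |α v|) * (2 * |ω| * (t - s) + ∫ v in s..t, |α v|) := by
  have hu' : u ∈ Icc x0 x1 := ⟨hs.1.trans hu.1, hu.2.trans ht.2⟩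
  have hphase : ‖(harmPhase x0 ω u - harmPhase x0 ω p) * conj (harmE x0 u α ω)‖
      ≤ 2 * |ω| * (t - s) * Real.exp (∫ v in x0..x1, |α v|) := by
    rw [norm_mul, RCLike.norm_conj]
    refine mul_le_mul ((norm_harmPhase_sub_le x0 ω u p).trans ?_) (norm_harmE_le ω hα hu')
      (norm_nonneg _) (mul_nonneg (by positivity) (sub_nonneg.2 (hp.1.trans hp.2)))
    gcongr
    exact abs_sub_le_of_le_of_le hu.1 hu.2 hp.1 hp.2
  have hvalue : ‖harmPhase x0 ω p * conj (harmE x0 u α ω - harmE x0 s α ω)‖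
      ≤ Real.exp (∫ v in x0..x1, |α v|) * ∫ v in s..t, |α v| := by
    rw [norm_mul, norm_harmPhase, one_mul, RCLike.norm_conj]
    refine (norm_harmE_sub_harmE_le ω hα hs hu' hu.1).trans ?_
    gcongr
    exact integral_abs_le_of_mem_Icc (intervalIntegrable_of_mem_Icc hα hs ht)
      ⟨le_rfl, hu.1.trans hu.2⟩ hu hu.1
  calc ‖harmPhase x0 ω u * conj (harmE x0 u α ω) - harmPhase x0 ω p * conj (harmE x0 s α ω)‖
      = ‖(harmPhase x0 ω u - harmPhase x0 ω p) * conj (harmE x0 u α ω)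
          + harmPhase x0 ω p * conj (harmE x0 u α ω - harmE x0 s α ω)‖ := by
        rw [map_sub]
        ring_nf
    _ ≤ _ := (norm_add_le_of_le hphase hvalue).trans_eq (by ring)

lemma norm_harmE_sub_harmE_sub_integral_mul_le (hα : IntervalIntegrable α volume x0 x1)
    {s t p : ℝ} (hs : s ∈ Icc x0 x1) (ht : t ∈ Icc x0 x1) (hp : p ∈ Icc s t) :
    ‖harmE x0 t α ω - harmE x0 s α ω
        - ((∫ u in s..t, α u : ℝ) : ℂ) * harmPhase x0 ω p * conj (harmE x0 s α ω)‖
      ≤ Real.exp (∫ u in x0..x1, |α u|) * (2 * |ω| * (t - s) + ∫ u in s..t, |α u|)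
        * ∫ u in s..t, |α u| := by
  have hst : s ≤ t := hp.1.trans hp.2
  have hαst := intervalIntegrable_of_mem_Icc hα hs ht
  have hfrozen : ((∫ u in s..t, α u : ℝ) : ℂ) * harmPhase x0 ω p * conj (harmE x0 s α ω)
      = ∫ u in s..t, (α u : ℂ) * harmPhase x0 ω p * conj (harmE x0 s α ω) := by
    rw [← intervalIntegral.integral_ofReal, ← intervalIntegral.integral_mul_const,
      ← intervalIntegral.integral_mul_const]
  have hfrozen_int : IntervalIntegrable
      (fun u ↦ (α u : ℂ) * harmPhase x0 ω p * conj (harmE x0 s α ω)) volume s t :=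
    IntervalIntegrable.mul_const (IntervalIntegrable.mul_const ⟨hαst.1.ofReal, hαst.2.ofReal⟩ _) _
  rw [harmE_sub_harmE ω hα hs ht, hfrozen,
    ← intervalIntegral.integral_sub (intervalIntegrable_harmE_integrand ω hα hs ht) hfrozen_int,
    ← intervalIntegral.integral_const_mul]
  refine intervalIntegral.norm_integral_le_of_norm_le hst (.of_forall fun u hu ↦ ?_)
    (hαst.abs.const_mul _)
  rw [mul_assoc, mul_assoc, ← mul_sub, norm_mul, Complex.norm_real, Real.norm_eq_abs, mul_comm]
  gcongr
  exact norm_harmPhase_mul_conj_harmE_sub_le hα hs ht hp ⟨hu.1.le, hu.2⟩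

lemma norm_harmE_sub_harmE_sub_tanh_mul_le (hα : IntervalIntegrable α volume x0 x1)
    {s t p : ℝ} (hs : s ∈ Icc x0 x1) (ht : t ∈ Icc x0 x1) (hp : p ∈ Icc s t) :
    ‖harmE x0 t α ω - harmE x0 s α ω
        - (Real.tanh (∫ u in s..t, α u) : ℂ) * harmPhase x0 ω p * conj (harmE x0 s α ω)‖
      ≤ Real.exp (∫ u in x0..x1, |α u|) * (2 * |ω| * (t - s) + 2 * ∫ u in s..t, |α u|)
        * ∫ u in s..t, |α u| := by
  set a : ℝ := ∫ u in s..t, α u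
  have ha : |a| ≤ ∫ u in s..t, |α u| :=
    intervalIntegral.abs_integral_le_integral_abs (hp.1.trans hp.2)
  have htanh : ‖((a - Real.tanh a : ℝ) : ℂ) * harmPhase x0 ω p * conj (harmE x0 s α ω)‖
      ≤ (∫ u in s..t, |α u|) ^ 2 * Real.exp (∫ u in x0..x1, |α u|) := by
    rw [norm_mul_harmPhase_mul_conj]
    gcongr
    · exact (abs_sub_tanh_le_sq a).trans (sq_le_sq.2 (ha.trans (le_abs_self _)))
    · exact norm_harmE_le ω hα hs
  have hsplit := norm_add_le_of_le
    (norm_harmE_sub_harmE_sub_integral_mul_le (ω := ω) hα hs ht hp) htanh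
  refine (congrArg norm ?_).trans_le (hsplit.trans_eq ?_)
  · push_cast
    ring
  · ring

lemma norm_add_tanh_mul_sub_harmE_le (hα : IntervalIntegrable α volume x0 x1)
    {s t p : ℝ} (hs : s ∈ Icc x0 x1) (ht : t ∈ Icc x0 x1) (hp : p ∈ Icc s t) (w : ℂ) :
    ‖w + (Real.tanh (∫ u in s..t, α u) : ℂ) * harmPhase x0 ω p * conj w - harmE x0 t α ω‖
      ≤ (1 + ∫ u in s..t, |α u|) * ‖w - harmE x0 s α ω‖
        + Real.exp (∫ u in x0..x1, |α u|) * (2 * |ω| * (t - s) + 2 * ∫ u in s..t, |α u|)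
          * ∫ u in s..t, |α u| := by
  set τ := Real.tanh (∫ u in s..t, α u)
  have hgrowth : ‖(τ : ℂ) * harmPhase x0 ω p * conj (w - harmE x0 s α ω)‖
      ≤ (∫ u in s..t, |α u|) * ‖w - harmE x0 s α ω‖ := by
    rw [norm_mul_harmPhase_mul_conj]
    gcongr
    exact (abs_tanh_le_abs _).trans
      (intervalIntegral.abs_integral_le_integral_abs (hp.1.trans hp.2))
  refine (congrArg norm ?_).trans_le ((norm_sub_le_of_le (norm_add_le_of_le le_rfl hgrowth)
    (norm_harmE_sub_harmE_sub_tanh_mul_le (ω := ω) hα hs ht hp)).trans_eq (by ring))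
  rw [map_sub]
  ring

lemma norm_sub_harmE_le_of_tanh_scheme (hα : IntervalIntegrable α volume x0 x1) {n : ℕ}
    {m p : ℕ → ℝ} {P : ℕ → ℂ} {κ : ℝ} (hκ : 0 ≤ κ) (hm : Monotone m)
    (hmem : ∀ j ≤ n, m j ∈ Icc x0 x1) (hp : ∀ j < n, p j ∈ Icc (m j) (m (j + 1)))
    (hP : ∀ j < n, P (j + 1) = P j
      + (Real.tanh (∫ u in m j..m (j + 1), α u) : ℂ) * harmPhase x0 ω (p j) * conj (P j))
    (hcell : ∀ j < n, 2 * |ω| * (m (j + 1) - m j) + 2 * ∫ u in m j..m (j + 1), |α u| ≤ κ) :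
    ‖P n - harmE x0 (m n) α ω‖
      ≤ (‖P 0 - harmE x0 (m 0) α ω‖
          + Real.exp (∫ u in x0..x1, |α u|) * κ * ∫ u in x0..x1, |α u|)
        * Real.exp (∫ u in x0..x1, |α u|) := by
  set M := Real.exp (∫ u in x0..x1, |α u|)
  set c : ℕ → ℝ := fun j ↦ ∫ u in m j..m (j + 1), |α u|
  have hc : ∀ j, 0 ≤ c j := fun j ↦
    intervalIntegral.integral_nonneg (hm j.le_succ) fun _ _ ↦ abs_nonneg _
  have hstep : ∀ j < n, ‖P (j + 1) - harmE x0 (m (j + 1)) α ω‖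
      ≤ (1 + c j) * ‖P j - harmE x0 (m j) α ω‖ + M * κ * c j := fun j hj ↦ by
    rw [hP j hj]
    refine (norm_add_tanh_mul_sub_harmE_le hα (hmem j hj.le) (hmem (j + 1) hj) (hp j hj)
      (P j)).trans ?_
    gcongr
    · exact hc j
    · exact hcell j hj
  have hsum : ∑ j ∈ Finset.range n, c j ≤ ∫ u in x0..x1, |α u| := by
    rw [intervalIntegral.sum_integral_adjacent_intervals fun j hj ↦
      intervalIntegrable_of_mem_Icc hα.abs (hmem j hj.le) (hmem (j + 1) hj)]
    exact integral_abs_le_of_mem_Icc hα (hmem 0 n.zero_le) (hmem n le_rfl) (hm n.zero_le)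
  have hA : 0 ≤ ∫ u in x0..x1, |α u| := (Finset.sum_nonneg fun j _ ↦ hc j).trans hsum
  refine (discrete_gronwall_of_lt (fun j ↦ norm_nonneg (P j - harmE x0 (m j) α ω)) hstep hc
    fun j ↦ mul_nonneg (by positivity) (hc j)).trans ?_
  rw [← Finset.mul_sum]
  gcongr
  exact Real.exp_le_exp.2 hsum

end EulerScheme

section OrthogonalPolynomials

variable (r : ℕ → ℝ) {z : ℂ}

lemma opucPsi_fst_eq_pow_mul_conj_snd (hz : ‖z‖ = 1) (j : ℕ) :
    (opucPsi r j).1 z = z ^ j * conj ((opucPsi r j).2 z) := by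
  have hzz : z * conj z = 1 := by simp [Complex.mul_conj, Complex.normSq_eq_norm_sq, hz]
  induction j with
  | zero => simp [opucPsi]
  | succ j ih =>
    have hpow : z ^ j * conj z ^ j = 1 := by rw [← mul_pow, hzz, one_pow]
    simp only [opucPsi, ih, map_add, map_mul, map_pow, Complex.conj_conj, Complex.conj_ofReal]
    linear_combination (-(r (j + 1) : ℂ) * (opucPsi r j).2 z) * hpow
      - (r (j + 1) : ℂ) * (opucPsi r j).2 z * (z ^ j * conj z ^ j) * hzz

lemma opucPsi_snd_succ (hz : ‖z‖ = 1) (j : ℕ) :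
    (opucPsi r (j + 1)).2 z
      = (opucPsi r j).2 z + (r (j + 1) : ℂ) * z ^ (j + 1) * conj ((opucPsi r j).2 z) := by
  simp only [opucPsi, opucPsi_fst_eq_pow_mul_conj_snd r hz]
  ring

end OrthogonalPolynomials

section Convergence

/-- The left endpoint `y_{j+1} - D/2 = y_j + D/2` of the `(j+1)`-st cell of the mesh
`y_j = x0 + j D`. Indexing by left endpoints makes the cells consecutive intervals starting at
`j = 0`. -/
noncomputable def cellEndpoint (x0 D : ℝ) (j : ℕ) : ℝ := x0 + D / 2 + j * D

lemma cellEndpoint_eq_sub (x0 D : ℝ) (j : ℕ) :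
    cellEndpoint x0 D j = x0 + (j + 1 : ℕ) * D - D / 2 := by
  rw [cellEndpoint]
  push_cast
  ring

lemma cellEndpoint_succ (x0 D : ℝ) (j : ℕ) :
    cellEndpoint x0 D (j + 1) = x0 + (j + 1 : ℕ) * D + D / 2 := by
  rw [cellEndpoint]
  ring

variable {x0 x1 D : ℝ} {n : ℕ}

lemma monotone_cellEndpoint (hD : 0 ≤ D) : Monotone (cellEndpoint x0 D) := fun i j hij ↦ by
  unfold cellEndpoint
  gcongr

lemma sub_cellEndpoint_last (hD : D = (x1 - x0) / (n + 1)) :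
    x1 - cellEndpoint x0 D n = D / 2 := by
  rw [cellEndpoint, hD]
  field

lemma cellEndpoint_mem_Icc (hx : x0 ≤ x1) (hD : D = (x1 - x0) / (n + 1)) {j : ℕ} (hj : j ≤ n) :
    cellEndpoint x0 D j ∈ Icc x0 x1 := by
  have hD₀ : 0 ≤ D := hD ▸ div_nonneg (sub_nonneg.2 hx) (by positivity)
  have hlast := sub_cellEndpoint_last hD
  refine ⟨?_, (monotone_cellEndpoint hD₀ hj).trans (by linarith)⟩
  rw [cellEndpoint, add_assoc]
  exact le_add_of_nonneg_right (by positivity)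

variable {α : ℝ → ℝ} {η : ℝ} {ρ : ℕ → ℝ}

lemma norm_opucPsi_snd_sub_harmE_cellEndpoint_le (hx : x0 ≤ x1)
    (hα : IntervalIntegrable α volume x0 x1) (ω : ℝ) (hD : D = (x1 - x0) / (n + 1)) (hDη : D ≤ η)
    (hη : ∀ s ∈ Icc x0 x1, ∀ t ∈ Icc x0 x1, s ≤ t → t - s ≤ D → ∫ u in s..t, |α u| ≤ η)
    (hρ : ∀ j < n, ρ (j + 1)
      = Real.tanh (∫ u in cellEndpoint x0 D j..cellEndpoint x0 D (j + 1), α u)) :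
    ‖(opucPsi ρ n).2 (Complex.exp (2 * Complex.I * (D : ℂ) * (ω : ℂ)))
        - harmE x0 (cellEndpoint x0 D n) α ω‖
      ≤ (‖1 - harmE x0 (cellEndpoint x0 D 0) α ω‖
          + Real.exp (∫ u in x0..x1, |α u|) * ((2 * |ω| + 2) * η) * ∫ u in x0..x1, |α u|)
        * Real.exp (∫ u in x0..x1, |α u|) := by
  have hz : ‖Complex.exp (2 * Complex.I * (D : ℂ) * (ω : ℂ))‖ = 1 := by
    simpa [harmPhase] using norm_harmPhase x0 ω (x0 + D)
  have hD₀ : 0 ≤ D := hD ▸ div_nonneg (sub_nonneg.2 hx) (by positivity)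
  have hη₀ : 0 ≤ η := hD₀.trans hDη
  refine norm_sub_harmE_le_of_tanh_scheme hα (p := fun j ↦ x0 + (j + 1 : ℕ) * D)
    (P := fun j ↦ (opucPsi ρ j).2 _) (by positivity) (monotone_cellEndpoint hD₀)
    (fun j hj ↦ cellEndpoint_mem_Icc hx hD hj) (fun j _ ↦ ?_) (fun j hj ↦ ?_) (fun j hj ↦ ?_)
  · rw [cellEndpoint_eq_sub, cellEndpoint_succ]
    constructor <;> linarith
  · rw [opucPsi_snd_succ ρ hz, hρ j hj, harmPhase_add_nat_mul]
  · have hlength : cellEndpoint x0 D (j + 1) - cellEndpoint x0 D j = D := by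
      rw [cellEndpoint_succ, cellEndpoint_eq_sub]
      ring
    have hmass := hη _ (cellEndpoint_mem_Icc hx hD hj.le) _ (cellEndpoint_mem_Icc hx hD hj)
      (monotone_cellEndpoint hD₀ j.le_succ) hlength.le
    rw [hlength]
    calc 2 * |ω| * D + 2 * ∫ u in cellEndpoint x0 D j..cellEndpoint x0 D (j + 1), |α u|
        ≤ 2 * |ω| * η + 2 * η := by gcongr
      _ = (2 * |ω| + 2) * η := by ring

lemma norm_opucPsi_snd_sub_harmE_le (hx : x0 ≤ x1) (hα : IntervalIntegrable α volume x0 x1)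
    (ω : ℝ) (hD : D = (x1 - x0) / (n + 1)) (hDη : D ≤ η)
    (hη : ∀ s ∈ Icc x0 x1, ∀ t ∈ Icc x0 x1, s ≤ t → t - s ≤ D → ∫ u in s..t, |α u| ≤ η)
    (hρ : ∀ j < n, ρ (j + 1)
      = Real.tanh (∫ u in cellEndpoint x0 D j..cellEndpoint x0 D (j + 1), α u)) :
    ‖(opucPsi ρ n).2 (Complex.exp (2 * Complex.I * (D : ℂ) * (ω : ℂ))) - harmE x0 x1 α ω‖
      ≤ Real.exp (∫ u in x0..x1, |α u|)
        * (Real.exp (∫ u in x0..x1, |α u|)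
          * (1 + (2 * |ω| + 2) * ∫ u in x0..x1, |α u|) + 1) * η := by
  set A := ∫ u in x0..x1, |α u|
  have hD₀ : 0 ≤ D := hD ▸ div_nonneg (sub_nonneg.2 hx) (by positivity)
  have hosc : ∀ s ∈ Icc x0 x1, ∀ t ∈ Icc x0 x1, s ≤ t → t - s ≤ D →
      ‖harmE x0 t α ω - harmE x0 s α ω‖ ≤ Real.exp A * η := fun s hs t ht hst hlen ↦
    (norm_harmE_sub_harmE_le ω hα hs ht hst).trans (by gcongr; exact hη s hs t ht hst hlen)
  have hfirst : ‖1 - harmE x0 (cellEndpoint x0 D 0) α ω‖ ≤ Real.exp A * η := by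
    have h₀ := cellEndpoint_mem_Icc hx hD n.zero_le
    rw [← harmE_self (α := α) (x0 := x0) ω, norm_sub_rev]
    refine hosc _ (left_mem_Icc.2 hx) _ h₀ h₀.1 ?_
    rw [cellEndpoint]
    push_cast
    linarith
  have hlast : ‖harmE x0 x1 α ω - harmE x0 (cellEndpoint x0 D n) α ω‖ ≤ Real.exp A * η := by
    have hn := cellEndpoint_mem_Icc hx hD le_rfl
    refine hosc _ hn _ (right_mem_Icc.2 hx) hn.2 ?_
    rw [sub_cellEndpoint_last hD]
    linarith
  have hscheme := norm_opucPsi_snd_sub_harmE_cellEndpoint_le hx hα ω hD hDη hη hρ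
  rw [norm_sub_rev] at hlast
  refine (norm_sub_le_norm_sub_add_norm_sub _ _ _).trans ((add_le_add hscheme hlast).trans ?_)
  calc _ ≤ (Real.exp A * η + Real.exp A * ((2 * |ω| + 2) * η) * A) * Real.exp A
        + Real.exp A * η := by gcongr
    _ = _ := by ring

lemma tendstoUniformlyOn_opucPsi_snd_of_tanh (hx : x0 ≤ x1)
    (hα : IntervalIntegrable α volume x0 x1) {Δ : ℕ → ℝ}
    (hΔ : ∀ n : ℕ, Δ n = (x1 - x0) / (n + 1)) {r : ℕ → ℕ → ℝ}
    (hr : ∀ n, ∀ j < n, r n (j + 1)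
      = Real.tanh (∫ u in cellEndpoint x0 (Δ n) j..cellEndpoint x0 (Δ n) (j + 1), α u)) (Ω : ℝ) :
    TendstoUniformlyOn
      (fun (n : ℕ) (ω : ℝ) ↦
        (opucPsi (r n) n).2 (Complex.exp (2 * Complex.I * (Δ n : ℂ) * (ω : ℂ))))
      (fun ω : ℝ ↦ harmE x0 x1 α (ω : ℂ)) atTop (Icc (-Ω) Ω) := by
  set A := ∫ u in x0..x1, |α u|
  have hA : 0 ≤ A := intervalIntegral.integral_nonneg hx fun _ _ ↦ abs_nonneg _
  let K : ℝ := Real.exp A * (Real.exp A * (1 + (2 * Ω + 2) * A) + 1)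
  have hΔ_lim : Tendsto Δ atTop (𝓝 0) := by
    have h := tendsto_one_div_add_atTop_nhds_zero_nat.const_mul (x1 - x0)
    rw [mul_zero] at h
    exact h.congr fun n ↦ by rw [hΔ, mul_one_div]
  refine Metric.tendstoUniformlyOn_iff.2 fun ε hε ↦ ?_
  obtain ⟨η, hη, hKη⟩ : ∃ η > 0, K * η < ε := exists_pos_mul_lt hε K
  obtain ⟨δ, hδ, hmass⟩ := exists_pos_forall_integral_abs_lt hα hη
  filter_upwards [hΔ_lim.eventually_lt_const hδ, hΔ_lim.eventually_lt_const hη] with n hnδ hnη ω hω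
  have hbound := norm_opucPsi_snd_sub_harmE_le hx hα ω (hΔ n) hnη.le
    (fun s hs t ht hst hle ↦ (hmass s hs t ht hst (hle.trans_lt hnδ)).le) (hr n)
  rw [dist_comm, dist_eq_norm]
  refine (hbound.trans ?_).trans_lt hKη
  have hωΩ : |ω| ≤ Ω := abs_le.2 hω
  simp only [K]
  gcongr

end Convergence

theorem opuc_converges_to_harmonic_exponential_general
    {x0 x1 : ℝ} (hx : x0 ≤ x1) {ζ : ℝ → ℝ} (hζ : AbsolutelyContinuousOnInterval ζ x0 x1)
    (hpos : ∀ x ∈ Icc x0 x1, 0 < ζ x)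
    {α : ℝ → ℝ} (hα : ∀ᵐ x, x ∈ Icc x0 x1 → α x = -deriv ζ x / (2 * ζ x))
    {Δ : ℕ → ℝ} (hΔ : ∀ n : ℕ, Δ n = (x1 - x0) / (n + 1))
    {yy : ℕ → ℕ → ℝ} (hyy : ∀ n j : ℕ, yy n j = x0 + j * Δ n)
    {r : ℕ → ℕ → ℝ}
    (hr : ∀ n j : ℕ,
      r n j = (ζ (yy n j - Δ n / 2) - ζ (yy n j + Δ n / 2))
              / (ζ (yy n j - Δ n / 2) + ζ (yy n j + Δ n / 2)))
    (Ω : ℝ) :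
    TendstoUniformlyOn
      (fun (n : ℕ) (ω : ℝ) ↦
        (opucPsi (r n) n).2 (Complex.exp (2 * Complex.I * (Δ n : ℂ) * (ω : ℂ))))
      (fun ω : ℝ ↦ harmE x0 x1 α (ω : ℂ)) atTop (Icc (-Ω) Ω) := by
  rw [← uIcc_of_le hx] at hpos hα
  have hα_int : IntervalIntegrable α volume x0 x1 := by
    refine (intervalIntegrable_neg_half_logDeriv hζ hpos).congr_ae ?_
    refine (ae_restrict_iff' measurableSet_uIoc).2 ?_
    filter_upwards [hα] with u hu hmem using (hu (uIoc_subset_uIcc hmem)).symm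
  refine tendstoUniformlyOn_opucPsi_snd_of_tanh hx hα_int hΔ (fun n j hj ↦ ?_) Ω
  have hleft := Icc_subset_uIcc (cellEndpoint_mem_Icc hx (hΔ n) hj.le)
  have hright := Icc_subset_uIcc (cellEndpoint_mem_Icc hx (hΔ n) hj)
  rw [hr n (j + 1), hyy, ← cellEndpoint_eq_sub, ← cellEndpoint_succ,
    ← tanh_half_log_sub_log (hpos _ hleft) (hpos _ hright),
    ← integral_neg_half_logDeriv (hζ.mono (uIcc_subset_uIcc hleft hright)) fun u hu ↦
      hpos u (uIcc_subset_uIcc hleft hright hu)]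
  congr 1
  refine intervalIntegral.integral_congr_ae ?_
  filter_upwards [hα] with u hu hmem
  exact (hu (uIcc_subset_uIcc hleft hright (uIoc_subset_uIcc hmem))).symm

/-- The second singular approximation lemma (lem-singular-approximation) combined with
Proposition prop-opuc(i): the dual OPUC of the standard step approximants, evaluated at
`e^{2iΔ_n ω}`, converge to the harmonic exponential `E_α^{(x0,x1)}` uniformly on compact
subsets of `ℝ`. -/
theorem opuc_converges_to_harmonic_exponential
    (x0 x1 : ℝ) (hx : x0 < x1)
    (ζ : ℝ → ℝ) (hζ : ContDiff ℝ 1 ζ)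
    (hpos : ∀ x ∈ Set.Icc x0 x1, 0 < ζ x)
    (α : ℝ → ℝ) (hα : ∀ x, α x = -deriv ζ x / (2 * ζ x))
    (Δ : ℕ → ℝ) (hΔ : ∀ n : ℕ, Δ n = (x1 - x0) / (n + 1))
    (yy : ℕ → ℕ → ℝ) (hyy : ∀ n j : ℕ, yy n j = x0 + j * Δ n)
    (r : ℕ → ℕ → ℝ)
    (hr : ∀ n j : ℕ,
      r n j = (ζ (yy n j - Δ n / 2) - ζ (yy n j + Δ n / 2))
              / (ζ (yy n j - Δ n / 2) + ζ (yy n j + Δ n / 2))) :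
    ∀ Ω : ℝ, 0 < Ω →
      TendstoUniformlyOn
        (fun (n : ℕ) (ω : ℝ) =>
          (opucPsi (r n) n).2 (Complex.exp (2 * Complex.I * (Δ n : ℂ) * (ω : ℂ))))
        (fun ω : ℝ => harmE x0 x1 α (ω : ℂ))
        Filter.atTop (Set.Icc (-Ω) Ω) :=
  fun Ω _ ↦ opuc_converges_to_harmonic_exponential_general hx.le
    hζ.contDiffOn.absolutelyContinuousOnInterval hpos (.of_forall fun x _ ↦ hα x) hΔ hyy hr Ω
end
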